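/- The number |𝒜̄ₙ| of isomorphism classes of arithmetic expressions with exactly the variables x₁, …, xₙ equals 1, 4, 18, 93, 500, 2844 for n = 1, 2, 3, 4, 5, 6 respectively. -/

import Mathlib

/- Common framework: `K = ℝ(x₁,x₂,…)` is the field of rational functions over `ℝ` in
countably many variables (the fraction field of `MvPolynomial ℕ ℝ`), arithmetic
expressions, the permutation action, isomorphism, types, the `EndsWith` classification,
multilinear forms and monicity, isomorphism classes and their counting. -/

open MvPolynomial

noncomputable section

abbrev P : Type := MvPolynomial ℕ ℝ
abbrev K : Type := FractionRing P

def toK : P →+* K := algebraMap P K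

/-- The variable `xᵢ`, as an element of `K`. -/
def Xv (i : ℕ) : K := toK (X i)

/-- `Vars f` : the set of variables on which `f` depends, i.e. the variables occurring in a
representation of `f` as a quotient of two coprime polynomials. -/
def Vars (f : K) : Set ℕ :=
  {i | ∃ p q : P, q ≠ 0 ∧ IsRelPrime p q ∧ f = toK p / toK q ∧ (i ∈ p.vars ∨ i ∈ q.vars)}

/-- `𝒜` : the smallest subset of `K` containing every variable and closed under the four
binary operations applied to expressions with disjoint variable sets. -/
inductive IsAE : K → Prop
  | var (i : ℕ) : IsAE (Xv i)
  | add {g h : K} : IsAE g → IsAE h → Disjoint (Vars g) (Vars h) → IsAE (g + h)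
  | sub {g h : K} : IsAE g → IsAE h → Disjoint (Vars g) (Vars h) → IsAE (g - h)
  | mul {g h : K} : IsAE g → IsAE h → Disjoint (Vars g) (Vars h) → IsAE (g * h)
  | div {g h : K} : IsAE g → IsAE h → Disjoint (Vars g) (Vars h) → IsAE (g / h)

/-- The action `σ·f` of a permutation of the variables on `K`, substituting `σ(xᵢ)` for `xᵢ`. -/
def permAct (σ : Equiv.Perm ℕ) : K ≃+* K :=
  IsFractionRing.ringEquivOfRingEquiv (renameEquiv ℝ σ).toRingEquiv

/-- `f ≅ g` : `f` and `g` are isomorphic, i.e. differ by a permutation of the variables. -/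
def Iso (f g : K) : Prop := ∃ σ : Equiv.Perm ℕ, permAct σ f = g

/-- First type: `-f ∉ 𝒜`. -/
def FirstType (f : K) : Prop := IsAE f ∧ ¬ IsAE (-f)

/-- Second type: `-f ∈ 𝒜` but `f ≇ -f`. -/
def SecondType (f : K) : Prop := IsAE f ∧ IsAE (-f) ∧ ¬ Iso f (-f)

/-- Third type: `-f ∈ 𝒜` and `f ≅ -f`. -/
def ThirdType (f : K) : Prop := IsAE f ∧ IsAE (-f) ∧ Iso f (-f)

/-- The four binary operators. -/
inductive Op : Type
  | add | sub | mul | div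
deriving DecidableEq

/-- `EndsWith f o` : the arithmetic expression `f` ends with the operator `o`. -/
inductive EndsWith : K → Op → Prop
  | var (i : ℕ) : EndsWith (Xv i) Op.mul
  | add_base {i j : ℕ} (hij : i ≠ j) : EndsWith (Xv i + Xv j) Op.add
  | sub_base {i j : ℕ} (hij : i ≠ j) : EndsWith (Xv i - Xv j) Op.sub
  | mul_base {i j : ℕ} (hij : i ≠ j) : EndsWith (Xv i * Xv j) Op.mul
  | div_base {i j : ℕ} (hij : i ≠ j) : EndsWith (Xv i / Xv j) Op.div
  | add_rec {g h : K} {o₁ o₂ : Op} : IsAE g → IsAE h → Disjoint (Vars g) (Vars h) →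
      3 ≤ (Vars (g + h)).ncard → o₁ ≠ Op.sub → o₂ ≠ Op.sub →
      EndsWith g o₁ → EndsWith h o₂ → EndsWith (g + h) Op.add
  | mul_rec {g h : K} {o₁ o₂ : Op} : IsAE g → IsAE h → Disjoint (Vars g) (Vars h) →
      3 ≤ (Vars (g * h)).ncard → o₁ ≠ Op.div → o₂ ≠ Op.div →
      EndsWith g o₁ → EndsWith h o₂ → EndsWith (g * h) Op.mul
  | div_rec {g h : K} {o₁ o₂ : Op} : IsAE g → IsAE h → Disjoint (Vars g) (Vars h) →
      3 ≤ (Vars (g / h)).ncard → o₁ ≠ Op.div → o₂ ≠ Op.div →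
      EndsWith g o₁ → EndsWith h o₂ → EndsWith (g / h) Op.div
  | sub_rec {g h : K} {o₁ o₂ : Op} : IsAE g → IsAE h → Disjoint (Vars g) (Vars h) →
      3 ≤ (Vars (g - h)).ncard → o₁ ≠ Op.sub → o₂ ≠ Op.sub → FirstType h →
      EndsWith g o₁ → EndsWith h o₂ → EndsWith (g - h) Op.sub

/-- `f` ends with one of the operators in `s`. -/
def EndsIn (f : K) (s : Set Op) : Prop := ∃ o ∈ s, EndsWith f o

/-- The binary operation on `K` corresponding to an operator. -/
def applyOp (o : Op) (a b : K) : K :=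
  match o with
  | Op.add => a + b
  | Op.sub => a - b
  | Op.mul => a * b
  | Op.div => a / b

/-- The variable index set `{1, …, n}` (for the variables `x₁, …, xₙ`). -/
def varsUpTo (n : ℕ) : Set ℕ := {i | 1 ≤ i ∧ i ≤ n}

/-- `𝒜ₙ` : arithmetic expressions whose variable set is exactly `{x₁, …, xₙ}`. -/
def AEn (n : ℕ) : Set K := {f | IsAE f ∧ Vars f = varsUpTo n}

/-- A multilinear polynomial: degree at most `1` in each variable. -/
def Multilinear (p : P) : Prop := ∀ i : ℕ, p.degreeOf i ≤ 1

/-- The key of a (multilinear) monomial: the sorted list of variables occurring in it;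
keys are compared in the lexicographic order on lists. -/
def monKey (m : ℕ →₀ ℕ) : List ℕ := m.support.sort (· ≤ ·)

/-- A (multilinear) polynomial is monic if the coefficient of its lexicographically
leading (i.e. first) monomial is positive. -/
def MonicML (p : P) : Prop :=
  ∃ m ∈ p.support, 0 < p.coeff m ∧ ∀ m' ∈ p.support, monKey m ≤ monKey m'

/-- `MLForm f F₁ F₂` : `F₁ / F₂` is the multilinear form of `f`: `F₁, F₂` are coprime
multilinear polynomials, `F₂` is monic, and `f = F₁ / F₂`. -/
def MLForm (f : K) (F₁ F₂ : P) : Prop :=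
  Multilinear F₁ ∧ Multilinear F₂ ∧ IsRelPrime F₁ F₂ ∧ F₂ ≠ 0 ∧ MonicML F₂ ∧
    f = toK F₁ / toK F₂

/-- A monic arithmetic expression: the numerator of its multilinear form is monic as well. -/
def MonicAE (f : K) : Prop := ∃ F₁ F₂ : P, MLForm f F₁ F₂ ∧ MonicML F₁

/-- The isomorphism class of `f`. -/
def classOf (f : K) : Set K := {g | Iso f g}

/-- `S̄` : the set of isomorphism classes of elements of `S`. -/
def classes (S : Set K) : Set (Set K) := classOf '' S

/-- `|S̄|` : the number of isomorphism classes of elements of `S`. -/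
def countClasses (S : Set K) : ℕ := (classes S).ncard

/-- The number of isomorphism classes of elements of `S` depending on exactly `k` variables. -/
def gradeCount (S : Set K) (k : ℕ) : ℕ := countClasses {f ∈ S | (Vars f).ncard = k}

/-- `ω_n` for a graded family having `N k` elements in grade `k` : the sum over all
partitions `(k₁^{m₁},…,k_s^{m_s})` of `n` of `∏ⱼ C(N kⱼ + mⱼ - 1, mⱼ)`. -/
def omega (N : ℕ → ℕ) (n : ℕ) : ℕ :=
  ∑ p : n.Partition,
    ∏ k ∈ p.parts.toFinset, Nat.choose (N k + p.parts.count k - 1) (p.parts.count k)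

/-- `ω_n′` : the same sum restricted to non-trivial partitions, i.e. `ω_n - N n`. -/
def omega' (N : ℕ → ℕ) (n : ℕ) : ℕ := omega N n - N n

/-- `𝒜(s)` : arithmetic expressions ending with one of the operators in `s`. -/
def Aset (s : Set Op) : Set K := {f | IsAE f ∧ EndsIn f s}

/-- `ℱ(s)` : first-type arithmetic expressions ending with one of the operators in `s`. -/
def Fset (s : Set Op) : Set K := {f | FirstType f ∧ EndsIn f s}

/-- `ℬ(s)` : second-type arithmetic expressions ending with one of the operators in `s`. -/
def Bset (s : Set Op) : Set K := {f | SecondType f ∧ EndsIn f s}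

/-- `𝒞(s)` : third-type arithmetic expressions ending with one of the operators in `s`. -/
def Cset (s : Set Op) : Set K := {f | ThirdType f ∧ EndsIn f s}

/-- `ℳℬ(s)` : monic second-type arithmetic expressions ending with an operator in `s`. -/
def MBset (s : Set Op) : Set K := {f | SecondType f ∧ MonicAE f ∧ EndsIn f s}



/-! ### Reduced representations -/

/-- `f = p / q` in lowest terms. -/
def RRep (f : K) (p q : P) : Prop := q ≠ 0 ∧ IsRelPrime p q ∧ f = toK p / toK q

theorem toK_inj {p q : P} : toK p = toK q ↔ p = q :=
  (IsFractionRing.injective P K).eq_iff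

theorem toK_ne_zero {p : P} (h : p ≠ 0) : toK p ≠ 0 := by
  intro h0
  exact h (toK_inj.1 (h0.trans (map_zero toK).symm))

theorem RRep.exists (f : K) : ∃ p q, RRep f p q := by
  refine ⟨IsFractionRing.num P f, (IsFractionRing.den P f : P), ?_, ?_, ?_⟩
  · exact nonZeroDivisors.coe_ne_zero _
  · exact IsFractionRing.num_den_reduced P f
  · exact (IsFractionRing.mk'_num_den' P f).symm

theorem RRep.unique {f : K} {p q p' q' : P} (h : RRep f p q) (h' : RRep f p' q') :
    ∃ c : ℝ, c ≠ 0 ∧ p' = C c * p ∧ q' = C c * q := by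
  obtain ⟨hq, hr, he⟩ := h
  obtain ⟨hq', hr', he'⟩ := h'
  have h1 : p * q' = p' * q := by
    have := he.symm.trans he'
    rw [div_eq_div_iff (toK_ne_zero hq) (toK_ne_zero hq'), ← map_mul, ← map_mul] at this
    exact toK_inj.1 this
  have d1 : q ∣ q' := hr.symm.dvd_of_dvd_mul_left (h1 ▸ Dvd.intro_left _ rfl)
  have d2 : q' ∣ q := hr'.symm.dvd_of_dvd_mul_left (h1 ▸ Dvd.intro_left _ rfl)
  obtain ⟨u, hu⟩ := associated_of_dvd_dvd d1 d2
  obtain ⟨c, hc, huc⟩ := isUnit_iff_eq_C_of_isReduced.1 u.isUnit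
  refine ⟨c, hc.ne_zero, ?_, ?_⟩
  · have : (p' - C c * p) * q = 0 := by
      rw [sub_mul, ← h1, ← hu, huc]; ring
    rcases mul_eq_zero.1 this with h | h
    · exact sub_eq_zero.1 h
    · exact absurd h hq
  · rw [← hu, huc]; ring

theorem RRep.vars {f : K} {p q : P} (h : RRep f p q) : Vars f = ↑(p.vars ∪ q.vars) := by
  ext i
  simp only [Finset.coe_union, Set.mem_union, Finset.mem_coe]
  constructor
  · rintro ⟨p', q', h1, h2, h3, h4⟩
    obtain ⟨c, hc, rfl, rfl⟩ := h.unique ⟨h1, h2, h3⟩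
    rwa [vars_C_mul _ hc, vars_C_mul _ hc] at h4
  · intro hi
    exact ⟨p, q, h.1, h.2.1, h.2.2, hi⟩

theorem Vars_finite (f : K) : (Vars f).Finite := by
  obtain ⟨p, q, h⟩ := RRep.exists f
  rw [h.vars]
  exact Finset.finite_toSet _

theorem vars_subset_of_dvd {p q : P} (h : p ∣ q) (hq : q ≠ 0) : p.vars ⊆ q.vars := by
  obtain ⟨r, rfl⟩ := h
  intro i hi
  rw [mem_vars_iff_degreeOf_ne_zero] at hi ⊢
  rw [degreeOf_mul_eq (left_ne_zero_of_mul hq) (right_ne_zero_of_mul hq)]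
  omega

theorem relPrime_of_disjoint {p q : P} (hp : p ≠ 0) (hq : q ≠ 0) (h : Disjoint p.vars q.vars) :
    IsRelPrime p q := by
  intro d hd1 hd2
  have h0 : d.vars = ∅ := by
    rw [← Finset.subset_empty, ← Finset.disjoint_iff_inter_eq_empty.1 h]
    exact Finset.subset_inter (vars_subset_of_dvd hd1 hp) (vars_subset_of_dvd hd2 hq)
  rw [vars_eq_empty_iff_eq_C] at h0
  rw [isUnit_iff_eq_C_of_isReduced]
  refine ⟨_, ?_, h0⟩
  rw [isUnit_iff_ne_zero]
  intro hc
  rw [hc, C_0] at h0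
  subst h0
  exact hp (zero_dvd_iff.1 hd1)

theorem RRep.disj {f g : K} {p q r s : P} (h : RRep f p q) (h' : RRep g r s)
    (hd : Disjoint (Vars f) (Vars g)) : Disjoint (p.vars ∪ q.vars) (r.vars ∪ s.vars) := by
  rw [h.vars, h'.vars] at hd
  exact_mod_cast hd

theorem RRep.num_ne_zero {f : K} {p q : P} (h : RRep f p q) (hf : f ≠ 0) : p ≠ 0 := by
  rintro rfl
  apply hf
  rw [h.2.2]
  simp

theorem RRep.neg {f : K} {p q : P} (h : RRep f p q) : RRep (-f) (-p) q :=
  ⟨h.1, h.2.1.neg_left, by rw [h.2.2, map_neg, neg_div]⟩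

theorem RRep.inv {f : K} {p q : P} (h : RRep f p q) (hf : f ≠ 0) : RRep f⁻¹ q p :=
  ⟨h.num_ne_zero hf, h.2.1.symm, by rw [h.2.2, inv_div]⟩

theorem RRep.mul {f g : K} {p q r s : P} (h : RRep f p q) (h' : RRep g r s) (hf : f ≠ 0) (hg : g ≠ 0)
    (hd : Disjoint (Vars f) (Vars g)) : RRep (f * g) (p * r) (q * s) := by
  have hd' := h.disj h' hd
  simp only [Finset.disjoint_union_left, Finset.disjoint_union_right] at hd'
  refine ⟨mul_ne_zero h.1 h'.1, ?_, ?_⟩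
  · refine IsRelPrime.mul_left (IsRelPrime.mul_right h.2.1 ?_) (IsRelPrime.mul_right ?_ h'.2.1)
    · exact relPrime_of_disjoint (h.num_ne_zero hf) h'.1 hd'.2.1
    · exact relPrime_of_disjoint (h'.num_ne_zero hg) h.1 hd'.1.2.symm
  · rw [h.2.2, h'.2.2, map_mul, map_mul, div_mul_div_comm]

theorem RRep.add {f g : K} {p q r s : P} (h : RRep f p q) (h' : RRep g r s)
    (hd : Disjoint (Vars f) (Vars g)) : RRep (f + g) (p * s + q * r) (q * s) := by
  have hd' := h.disj h' hd
  simp only [Finset.disjoint_union_left, Finset.disjoint_union_right] at hd'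
  have hqs : IsRelPrime q s := relPrime_of_disjoint h.1 h'.1 hd'.2.2
  refine ⟨mul_ne_zero h.1 h'.1, ?_, ?_⟩
  · refine IsRelPrime.mul_right ?_ ?_
    · exact IsRelPrime.add_mul_left_left (IsRelPrime.mul_left h.2.1 hqs.symm) _
    · rw [add_comm, mul_comm p]
      exact IsRelPrime.add_mul_left_left (IsRelPrime.mul_left hqs h'.2.1) _
  · rw [h.2.2, h'.2.2, map_mul, map_add, map_mul, map_mul,
      div_add_div _ _ (toK_ne_zero h.1) (toK_ne_zero h'.1)]

theorem RRep.X (i : ℕ) : RRep (Xv i) (MvPolynomial.X i) 1 :=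
  ⟨one_ne_zero, isRelPrime_one_right, by rw [map_one, div_one]; rfl⟩

theorem Vars_X (i : ℕ) : Vars (Xv i) = {i} := by
  rw [(RRep.X i).vars]
  simp

theorem Xv_ne_zero (i : ℕ) : Xv i ≠ 0 := toK_ne_zero (X_ne_zero i)

theorem Vars_neg (f : K) : Vars (-f) = Vars f := by
  obtain ⟨p, q, h⟩ := RRep.exists f
  rw [h.vars, h.neg.vars, vars_neg]

theorem Vars_zero : Vars (0 : K) = ∅ := by
  have : RRep 0 0 1 := ⟨one_ne_zero, isRelPrime_one_right, by simp⟩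
  rw [this.vars]
  simp

theorem Vars_inv (f : K) : Vars f⁻¹ = Vars f := by
  by_cases hf : f = 0
  · rw [hf, inv_zero]
  obtain ⟨p, q, h⟩ := RRep.exists f
  rw [h.vars, (h.inv hf).vars, Finset.union_comm]

/-! ### The permutation action -/

theorem permAct_toK (σ : Equiv.Perm ℕ) (p : P) : permAct σ (toK p) = toK (rename σ p) :=
  IsFractionRing.ringEquivOfRingEquiv_algebraMap (K := K) (L := K)
    (renameEquiv ℝ σ).toRingEquiv p

theorem permAct_X (σ : Equiv.Perm ℕ) (i : ℕ) : permAct σ (Xv i) = Xv (σ i) := by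
  rw [Xv, permAct_toK, rename_X]; rfl

theorem permAct_comp (σ τ : Equiv.Perm ℕ) (f : K) :
    permAct σ (permAct τ f) = permAct (σ * τ) f := by
  obtain ⟨p, q, h⟩ := RRep.exists f
  rw [h.2.2]
  simp only [map_div₀, permAct_toK, rename_rename]
  rfl

theorem permAct_congr {σ τ : Equiv.Perm ℕ} {f : K} (h : ∀ i ∈ Vars f, σ i = τ i) :
    permAct σ f = permAct τ f := by
  obtain ⟨p, q, hr⟩ := RRep.exists f
  rw [hr.vars] at h
  simp only [Finset.coe_union, Set.mem_union, Finset.mem_coe] at h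
  rw [hr.2.2]
  simp only [map_div₀, permAct_toK]
  have key : ∀ r : P, (∀ i ∈ r.vars, σ i = τ i) → rename σ r = rename τ r := by
    intro r hh
    refine hom_congr_vars (f₁ := (rename σ : P →ₐ[ℝ] P).toRingHom)
      (f₂ := (rename τ : P →ₐ[ℝ] P).toRingHom) ?_ ?_ rfl
    · ext; simp
    · intro i hi _
      simp [hh i hi]
  rw [key p fun i hi => h i (Or.inl hi), key q fun i hi => h i (Or.inr hi)]

theorem permAct_one (f : K) : permAct 1 f = f := by
  obtain ⟨p, q, h⟩ := RRep.exists f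
  rw [h.2.2]
  simp only [map_div₀, permAct_toK]
  simp [rename_id]

theorem vars_rename_perm (σ : Equiv.Perm ℕ) (p : P) : (rename σ p).vars = p.vars.image σ := by
  apply subset_antisymm (vars_rename _ _)
  have h := vars_rename σ.symm (rename σ p)
  rw [rename_rename] at h
  have h2 : rename (σ.symm ∘ σ) p = p := by simp [rename_id]
  rw [h2] at h
  intro i hi
  obtain ⟨j, hj, rfl⟩ := Finset.mem_image.1 hi
  obtain ⟨k, hk, hk'⟩ := Finset.mem_image.1 (h hj)
  rw [← hk']
  simpa using hk

theorem RRep.perm {f : K} {p q : P} (h : RRep f p q) (σ : Equiv.Perm ℕ) :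
    RRep (permAct σ f) (rename σ p) (rename σ q) := by
  refine ⟨?_, ?_, ?_⟩
  · intro h0
    exact h.1 (rename_injective σ σ.injective (by rw [h0, map_zero]))
  · have hi : ∀ r : P, rename σ (rename σ.symm r) = r := by
      intro r; rw [rename_rename]; simp [rename_id]
    have hi' : ∀ r : P, rename σ.symm (rename σ r) = r := by
      intro r; rw [rename_rename]; simp [rename_id]
    intro d h1 h2
    have h1' := map_dvd (rename (R := ℝ) σ.symm) h1
    have h2' := map_dvd (rename (R := ℝ) σ.symm) h2
    rw [hi'] at h1' h2'
    have := (h.2.1 h1' h2').map (rename (R := ℝ) σ)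
    rwa [hi] at this
  · rw [h.2.2]
    simp only [map_div₀, permAct_toK]

theorem Vars_perm (σ : Equiv.Perm ℕ) (f : K) : Vars (permAct σ f) = σ '' Vars f := by
  obtain ⟨p, q, h⟩ := RRep.exists f
  rw [h.vars, (h.perm σ).vars, vars_rename_perm, vars_rename_perm, ← Finset.image_union]
  simp

theorem notMem_Vars_iff {f : K} {i j : ℕ} (hj : j ∉ Vars f) :
    i ∉ Vars f ↔ permAct (Equiv.swap i j) f = f := by
  constructor
  · intro hi
    conv_rhs => rw [← permAct_one f]
    apply permAct_congr
    intro k hk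
    rw [Equiv.swap_apply_of_ne_of_ne]
    · rfl
    · rintro rfl; exact hi hk
    · rintro rfl; exact hj hk
  · intro h hi
    apply hj
    rw [← h, Vars_perm]
    exact ⟨i, hi, by simp⟩

theorem Vars_op (op : K → K → K) (hop : ∀ σ a b, permAct σ (op a b) = op (permAct σ a) (permAct σ b))
    {f g : K} (hl : ∀ a, op a g = op f g → a = f) (hr : ∀ b, op f b = op f g → b = g)
    (hd : Disjoint (Vars f) (Vars g)) : Vars (op f g) = Vars f ∪ Vars g := by
  ext i
  obtain ⟨j, hj⟩ := ((Vars_finite f).union ((Vars_finite g).union (Vars_finite (op f g)))).exists_notMem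
  simp only [Set.mem_union, not_or] at hj
  obtain ⟨hj1, hj2, hj3⟩ := hj
  rw [← not_iff_not, Set.mem_union, not_or, notMem_Vars_iff hj1, notMem_Vars_iff hj2,
    notMem_Vars_iff hj3]
  constructor
  · intro h
    rw [hop] at h
    by_cases hi : i ∈ Vars f
    · have hi' : i ∉ Vars g := fun h' => Set.disjoint_left.1 hd hi h'
      rw [notMem_Vars_iff hj2] at hi'
      rw [hi'] at h
      exact ⟨hl _ h, hi'⟩
    · rw [notMem_Vars_iff hj1] at hi
      rw [hi] at h
      exact ⟨hi, hr _ h⟩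
  · rintro ⟨h1, h2⟩
    rw [hop, h1, h2]

theorem Vars_add {f g : K} (hd : Disjoint (Vars f) (Vars g)) : Vars (f + g) = Vars f ∪ Vars g :=
  Vars_op (· + ·) (fun _ _ _ => map_add _ _ _) (fun _ h => add_right_cancel h)
    (fun _ h => add_left_cancel h) hd

theorem Vars_sub {f g : K} (hd : Disjoint (Vars f) (Vars g)) : Vars (f - g) = Vars f ∪ Vars g :=
  Vars_op (· - ·) (fun _ _ _ => map_sub _ _ _) (fun _ h => sub_left_injective h)
    (fun _ h => sub_right_injective h) hd

theorem Vars_mul {f g : K} (hf : f ≠ 0) (hg : g ≠ 0) (hd : Disjoint (Vars f) (Vars g)) :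
    Vars (f * g) = Vars f ∪ Vars g :=
  Vars_op (· * ·) (fun _ _ _ => map_mul _ _ _) (fun _ h => mul_right_cancel₀ hg h)
    (fun _ h => mul_left_cancel₀ hf h) hd

theorem Vars_div {f g : K} (hf : f ≠ 0) (hg : g ≠ 0) (hd : Disjoint (Vars f) (Vars g)) :
    Vars (f / g) = Vars f ∪ Vars g := by
  rw [div_eq_mul_inv, Vars_mul hf (inv_ne_zero hg) (by rwa [Vars_inv]), Vars_inv]

/-! ### Computational part -/

/-- Unlabelled shapes of arithmetic expressions. -/
inductive S : Type
  | x | add (a b : S) | sub (a b : S) | mul (a b : S) | div (a b : S)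
deriving DecidableEq

namespace S

/-- Prefix code of a shape (used only to compare shapes). -/
def enc (s : S) : ℕ → ℕ :=
  S.rec (motive := fun _ => ℕ → ℕ) (fun n => Nat.mul n 5)
    (fun _ _ ea eb n => eb (ea (Nat.add (Nat.mul n 5) 1)))
    (fun _ _ ea eb n => eb (ea (Nat.add (Nat.mul n 5) 2)))
    (fun _ _ ea eb n => eb (ea (Nat.add (Nat.mul n 5) 3)))
    (fun _ _ ea eb n => eb (ea (Nat.add (Nat.mul n 5) 4))) s

def code (s : S) : ℕ := s.enc 0

/-- insert a term into a sorted sum -/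
def insA (t : S) : S → S
  | add u v => cond (Nat.ble t.code u.code) (add t (add u v)) (add u (insA t v))
  | c => cond (Nat.ble t.code c.code) (add t c) (add c t)

def mergeA (d : S) : S → S
  | add u v => insA u (mergeA d v)
  | c => insA c d

def insM (t : S) : S → S
  | mul u v => cond (Nat.ble t.code u.code) (mul t (mul u v)) (mul u (insM t v))
  | c => cond (Nat.ble t.code c.code) (mul t c) (mul c t)

def addR (a : S) : S → S
  | sub b1 b2 => sub (mergeA a b1) b2
  | b => mergeA a b

def addN (a b : S) : S :=
  match a with
  | sub a1 a2 => match b with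
    | sub b1 b2 => sub (mergeA a1 b1) (mergeA a2 b2)
    | b => sub (mergeA a1 b) a2
  | a => addR a b

def subF (t : S) : S → S
  | sub a1 a2 => sub a1 (insA t a2)
  | a => sub a t

def subTerm (ng : S → Option S) (a t : S) : S :=
  match ng t with
  | some t' => addN a t'
  | none => subF t a

def subComb (ng : S → Option S) : S → S → S
  | add u v, a => subComb ng v (subTerm ng a u)
  | u, a => subTerm ng a u

def subN (ng : S → Option S) (a : S) : S → S
  | sub b1 b2 => subComb ng b1 (addN a b2)
  | b => subComb ng b a

def negA (ng : S → Option S) : S → Option S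
  | add u v => match ng u with
    | some u' => some (subComb ng v u')
    | none => match negA ng v with
      | some w => some (subTerm ng w u)
      | none => none
  | u => ng u

def absS (ng : S → Option S) (u : S) : S × Bool :=
  match ng u with
  | none => (u, false)
  | some u' => cond (Nat.ble u.code u'.code) (u, false) (u', true)

def mulP (u : S) : S → S
  | div a b => div (insM u a) b
  | a => insM u a

def divP (u : S) : S → S
  | div a b => div a (insM u b)
  | a => div a u

def mulF (ng : S → Option S) (u : S) (st : S × Bool) : S × Bool :=
  match absS ng u, st with
  | (u', e), (p, s) => (mulP u' p, xor e s)

def divF (ng : S → Option S) (u : S) (st : S × Bool) : S × Bool :=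
  match absS ng u, st with
  | (u', e), (p, s) => (divP u' p, xor e s)

def mulC (ng : S → Option S) : S → S × Bool → S × Bool
  | mul u v, st => mulC ng v (mulF ng u st)
  | u, st => mulF ng u st

def divC (ng : S → Option S) : S → S × Bool → S × Bool
  | mul u v, st => divC ng v (divF ng u st)
  | u, st => divF ng u st

def initC (ng : S → Option S) : S → S × Bool
  | mul u v => mulC ng v (absS ng u)
  | u => absS ng u

def initP (ng : S → Option S) : S → S × Bool
  | div a b => divC ng b (initC ng a)
  | a => initC ng a

def mulT (ng : S → Option S) (st : S × Bool) : S → S × Bool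
  | div a b => divC ng b (mulC ng a st)
  | a => mulC ng a st

def divT (ng : S → Option S) (st : S × Bool) : S → S × Bool
  | div a b => mulC ng b (divC ng a st)
  | a => divC ng a st

def negM (ng : S → Option S) : S → Option S
  | mul u v => match ng u with
    | some u' => some (mul u' v)
    | none => match negM ng v with
      | some v' => some (mul u v')
      | none => none
  | u => ng u

def negP (ng : S → Option S) : S → Option S
  | div a b => match negM ng a with
    | some a' => some (div a' b)
    | none => match negM ng b with
      | some b' => some (div a b')
      | none => none
  | a => negM ng a

/-- restriction of a negation to those shapes which are isomorphic to their negative -/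
def ngC (ng : S → Option S) (u : S) : Option S :=
  match ng u with
  | some u' => cond (Nat.beq u.code u'.code) (some u') none
  | none => none

def fin (ng : S → Option S) : S × Bool → Option S
  | (p, false) => some p
  | (p, true) => match negP (ngC ng) p with
    | some p' => some p'
    | none => negP ng p

def negStep (ng : S → Option S) : S → Option S
  | x => none
  | add a b => negA ng (add a b)
  | sub a b => some (subComb ng a b)
  | mul a b => match initP ng (mul a b) with
    | (p, s) => fin ng (p, !s)
  | div a b => match initP ng (div a b) with
    | (p, s) => fin ng (p, !s)

def neg : ℕ → S → Option S
  | 0 => fun _ => none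
  | n + 1 => negStep (neg n)

def ngg : S → Option S := neg 5

def mulN (a b : S) : S :=
  match fin ngg (mulT ngg (initP ngg a) b) with
  | some t => t
  | none => mul a b

def divN (a b : S) : S :=
  match fin ngg (divT ngg (initP ngg a) b) with
  | some t => t
  | none => div a b

/-- evaluate a shape completely before continuing -/
def force {β : Type} (s : S) : (S → β) → β :=
  S.rec (motive := fun _ => (S → β) → β) (fun k => k x)
    (fun _ _ fa fb k => fa fun a => fb fun b => k (add a b))
    (fun _ _ fa fb k => fa fun a => fb fun b => k (sub a b))
    (fun _ _ fa fb k => fa fun a => fb fun b => k (mul a b))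
    (fun _ _ fa fb k => fa fun a => fb fun b => k (div a b)) s

end S

/-- Binary search trees. -/
inductive BT (α : Type) : Type
  | nil | node (l : BT α) (y : α) (r : BT α)

namespace BT

def ins {α : Type} [DecidableEq α] (lt : α → α → Bool) (z : α) (t : BT α) : BT α :=
  BT.rec (motive := fun _ => BT α) (node nil z nil)
    (fun l y r il ir =>
      Bool.rec (motive := fun _ => BT α)
        (Bool.rec (motive := fun _ => BT α)
          (Decidable.rec (motive := fun _ => BT α)
            (fun _ => node (node l y r) z nil) (fun _ => node l y r) (decEq z y))
          (BT.rec (motive := fun _ => BT α) nil (fun a b c _ _ => node l y (node a b c)) ir)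
          (lt y z))
        (BT.rec (motive := fun _ => BT α) nil (fun a b c _ _ => node (node a b c) y r) il)
        (lt z y)) t

def flat {α : Type} : BT α → List α → List α
  | nil, acc => acc
  | node l y r, acc => flat l (y :: flat r acc)

end BT


/-- force the evaluation of a natural number -/
def forceNat {β : Type} (n : ℕ) (k : ℕ → β) : β :=
  match n with
  | 0 => k 0
  | m + 1 => k (m + 1)

def forceInt {β : Type} (n : ℤ) (k : ℤ → β) : β :=
  match n with
  | Int.ofNat m => forceNat m fun m => k (Int.ofNat m)
  | Int.negSucc m => forceNat m fun m => k (Int.negSucc m)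

def forceL {α β : Type} : List α → (List α → β) → β
  | [], k => k []
  | a :: l, k => forceL l fun l => k (a :: l)

namespace BT

def force {α β : Type} (t : BT α) (k : BT α → β) : β :=
  match t with
  | nil => k nil
  | node l y r => k (node l y r)

def flatF {α β : Type} : BT α → List α → (List α → β) → β
  | nil, acc, k => k acc
  | node l y r, acc, k => flatF r acc fun acc => flatF l (y :: acc) k

end BT

open S in
def ltS (a b : S × ℕ) : Bool := Nat.blt a.2 b.2

def insS (s : S) (t : BT (S × ℕ)) : BT (S × ℕ) :=
  s.force fun s => forceNat (Nat.mod (Nat.mul s.code 1234567890123457) 1000000007) fun c => BT.ins ltS (s, c) t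

def ins4 (a b : S) (t : BT (S × ℕ)) : BT (S × ℕ) :=
  (insS (S.addN a b) t).force fun t =>
  (insS (S.subN S.ngg a b) t).force fun t =>
  (insS (S.mulN a b) t).force fun t =>
  (insS (S.divN a b) t)

def crossI (a : S) : List S → BT (S × ℕ) → BT (S × ℕ)
  | [], t => t
  | b :: m, t => (ins4 a b t).force fun t => crossI a m t

def cross (m : List S) : List S → BT (S × ℕ) → BT (S × ℕ)
  | [], t => t
  | a :: l, t => (crossI a m t).force fun t => cross m l t

def fsts : List (S × ℕ) → List S
  | [] => []
  | a :: l => a.1 :: fsts l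

def RL (t : BT (S × ℕ)) : List S :=
  t.flatF [] fun l => forceL (fsts l) fun l => l

def R1 : List S := [S.x]
def R2 : List S := RL (cross R1 R1 .nil)
def R3 : List S := forceL R2 fun R2 => RL (cross R2 R1 (cross R1 R2 .nil))
def R4 : List S := forceL R2 fun R2 => forceL R3 fun R3 =>
  RL (cross R1 R3 (cross R2 R2 (cross R3 R1 .nil)))
def R5 : List S := forceL R2 fun R2 => forceL R3 fun R3 => forceL R4 fun R4 =>
  RL (cross R1 R4 (cross R2 R3 (cross R3 R2 (cross R4 R1 .nil))))
def R6 : List S := forceL R2 fun R2 => forceL R3 fun R3 => forceL R4 fun R4 =>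
  forceL R5 fun R5 =>
  RL (cross R1 R5 (cross R2 R4 (cross R3 R3 (cross R4 R2 (cross R5 R1 .nil)))))

/-- Moments `E[P^j Q^(4-j)]`. -/
structure W5 : Type where
  w0 : ℤ
  w1 : ℤ
  w2 : ℤ
  w3 : ℤ
  w4 : ℤ

def W5.force {β : Type} (w : W5) (k : W5 → β) : β :=
  match w with
  | ⟨a, b, c, d, e⟩ => forceInt a fun a => forceInt b fun b => forceInt c fun c =>
     forceInt d fun d => forceInt e fun e => k ⟨a, b, c, d, e⟩

def W5.mul : W5 → W5 → W5
  | ⟨a0, a1, a2, a3, a4⟩, ⟨b0, b1, b2, b3, b4⟩ =>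
    ⟨Int.mul a0 b0, Int.mul a1 b1, Int.mul a2 b2, Int.mul a3 b3, Int.mul a4 b4⟩

def W5.inv : W5 → W5
  | ⟨a0, a1, a2, a3, a4⟩ => ⟨a4, a3, a2, a1, a0⟩

def W5.neg : W5 → W5
  | ⟨a0, a1, a2, a3, a4⟩ => ⟨a0, Int.neg a1, a2, Int.neg a3, a4⟩

def W5.add : W5 → W5 → W5
  | ⟨a0, a1, a2, a3, a4⟩, ⟨b0, b1, b2, b3, b4⟩ =>
  ⟨Int.mul a0 b0,
   Int.add (Int.mul a0 b1) (Int.mul a1 b0),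
   Int.add (Int.add (Int.mul a0 b2) (Int.mul a2 b0)) (Int.mul (Int.ofNat 2) (Int.mul a1 b1)),
   Int.add (Int.add (Int.mul a0 b3) (Int.mul a3 b0))
     (Int.mul (Int.ofNat 3) (Int.add (Int.mul a1 b2) (Int.mul a2 b1))),
   Int.add (Int.add (Int.add (Int.mul a0 b4) (Int.mul a4 b0))
     (Int.mul (Int.ofNat 4) (Int.add (Int.mul a1 b3) (Int.mul a3 b1))))
     (Int.mul (Int.ofNat 6) (Int.mul a2 b2))⟩

def S.W : S → W5
  | x => ⟨Int.ofNat 1, Int.ofNat 2, Int.ofNat 7, Int.ofNat 30, Int.ofNat 200⟩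
  | add a b => a.W.force fun u => b.W.force fun v => u.add v
  | sub a b => a.W.force fun u => b.W.force fun v => u.add v.neg
  | mul a b => a.W.force fun u => b.W.force fun v => u.mul v
  | div a b => a.W.force fun u => b.W.force fun v => u.mul v.inv

def W5.num (w : W5) : ℤ := 
  Int.add (Int.mul (Int.ofNat 1000000000000000000) w.w0)
    (Int.add (Int.add w.w1 (Int.mul (Int.ofNat 3) w.w2))
      (Int.add (Int.mul (Int.ofNat 7) w.w3) (Int.mul (Int.ofNat 11) w.w4)))

/-- A shape together with numerator and denominator of its numerical invariant. -/
def ltK (a b : S × ℕ × ℕ) : Bool := Nat.blt (Nat.mul a.2.1 b.2.2) (Nat.mul b.2.1 a.2.2)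

def insK (s : S) (t : BT (S × ℕ × ℕ)) : BT (S × ℕ × ℕ) :=
  s.W.force fun w => forceNat w.num.toNat fun a => forceNat w.w0.toNat fun b =>
    BT.ins ltK (s, a, b) t

def buildK : List S → BT (S × ℕ × ℕ) → BT (S × ℕ × ℕ)
  | [], t => t
  | s :: l, t => (insK s t).force fun t => buildK l t

def sortedK : List (S × ℕ × ℕ) → Bool
  | [] => true
  | [a] => Nat.blt 0 a.2.1 && Nat.blt 0 a.2.2
  | a :: b :: l => ltK a b && Nat.blt 0 a.2.1 && Nat.blt 0 a.2.2 && sortedK (b :: l)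

/-- number of leaves -/
def S.size : S → ℕ
  | x => 1
  | add a b => Nat.add a.size b.size
  | sub a b => Nat.add a.size b.size
  | mul a b => Nat.add a.size b.size
  | div a b => Nat.add a.size b.size

def allSize (n : ℕ) : List S → Bool
  | [] => true
  | s :: l => Nat.beq s.size n && allSize n l

def checkN (N n : ℕ) (l : List S) : Bool :=
  forceL l fun l => Nat.beq l.length N && allSize n l &&
    (buildK l .nil).flatF [] fun m => Nat.beq m.length N && sortedK m

/-! ### A numerical invariant: mixed moments of numerator and denominator -/

/-- moments of a single variable -/
def mom : ℕ → ℝ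
  | 0 => 1
  | 1 => 2
  | 2 => 7
  | 3 => 30
  | 4 => 200
  | _ => 0

/-- The linear functional sending a monomial to the product of the moments. -/
def EE : P →ₗ[ℝ] ℝ :=
  (basisMonomials ℕ ℝ).constr ℝ (fun s => s.prod (fun _ k => mom k))

theorem EE_monomial (s : ℕ →₀ ℕ) (c : ℝ) : EE (monomial s c) = c * s.prod (fun _ k => mom k) := by
  have h : monomial s c = c • (basisMonomials ℕ ℝ s : P) := by
    rw [coe_basisMonomials, smul_monomial, smul_eq_mul, mul_one]
  rw [h, map_smul, EE, Module.Basis.constr_basis, smul_eq_mul]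

theorem EE_C_mul (c : ℝ) (p : P) : EE (C c * p) = c * EE p := by
  rw [← smul_eq_C_mul, map_smul, smul_eq_mul]

theorem EE_mul {p q : P} (h : Disjoint p.vars q.vars) : EE (p * q) = EE p * EE q := by
  have hp : EE p = ∑ s ∈ p.support, coeff s p * s.prod (fun _ k => mom k) := by
    conv_lhs => rw [p.as_sum, map_sum]
    exact Finset.sum_congr rfl fun s _ => EE_monomial s _
  have hq : EE q = ∑ s ∈ q.support, coeff s q * s.prod (fun _ k => mom k) := by
    conv_lhs => rw [q.as_sum, map_sum]
    exact Finset.sum_congr rfl fun s _ => EE_monomial s _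
  rw [hp, hq, Finset.sum_mul_sum]
  conv_lhs => rw [p.as_sum, q.as_sum, Finset.sum_mul_sum, map_sum]
  refine Finset.sum_congr rfl fun s hs => ?_
  rw [map_sum]
  refine Finset.sum_congr rfl fun t ht => ?_
  rw [monomial_mul, EE_monomial, Finsupp.prod_add_index_of_disjoint]
  · ring
  · refine Finset.disjoint_of_subset_left ?_ (Finset.disjoint_of_subset_right ?_ h)
    · intro i hi
      exact (mem_vars i).2 ⟨s, hs, hi⟩
    · intro i hi
      exact (mem_vars i).2 ⟨t, ht, hi⟩

theorem EE_mul' {p q r s : P} (h : Disjoint (p.vars ∪ q.vars) (r.vars ∪ s.vars)) (i j k l : ℕ) :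
    EE ((p ^ i * q ^ j) * (r ^ k * s ^ l)) = EE (p ^ i * q ^ j) * EE (r ^ k * s ^ l) := by
  have key : ∀ (p q : P) (i j : ℕ), (p ^ i * q ^ j).vars ⊆ p.vars ∪ q.vars := fun p q i j =>
    (vars_mul _ _).trans (Finset.union_subset_union (vars_pow _ _) (vars_pow _ _))
  exact EE_mul (Finset.disjoint_of_subset_left (key _ _ _ _)
    (Finset.disjoint_of_subset_right (key _ _ _ _) h))

/-- `w` is the moment vector of `p, q`. -/
def MomW (p q : P) (w : W5) : Prop :=
  EE (p ^ 0 * q ^ 4) = w.w0 ∧ EE (p ^ 1 * q ^ 3) = w.w1 ∧ EE (p ^ 2 * q ^ 2) = w.w2 ∧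
    EE (p ^ 3 * q ^ 1) = w.w3 ∧ EE (p ^ 4 * q ^ 0) = w.w4

def HasW (f : K) (w : W5) : Prop := ∃ p q, RRep f p q ∧ MomW p q w

theorem HasW.xv (i : ℕ) : HasW (Xv i) (S.W S.x) := by
  refine ⟨_, _, RRep.X i, ?_⟩
  have h : ∀ j k : ℕ, EE (X i ^ j * 1 ^ k) = mom j := by
    intro j k
    rw [one_pow, mul_one, X_pow_eq_monomial, EE_monomial, one_mul]
    rw [Finsupp.prod_single_index rfl]
  simp only [MomW, h]
  simp [mom, S.W]

theorem HasW.neg {f : K} {w : W5} (h : HasW f w) : HasW (-f) w.neg := by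
  obtain ⟨p, q, hr, h0, h1, h2, h3, h4⟩ := h
  refine ⟨_, _, hr.neg, ?_⟩
  have e0 : (-p) ^ 0 * q ^ 4 = p ^ 0 * q ^ 4 := by ring
  have e1 : (-p) ^ 1 * q ^ 3 = - (p ^ 1 * q ^ 3) := by ring
  have e2 : (-p) ^ 2 * q ^ 2 = p ^ 2 * q ^ 2 := by ring
  have e3 : (-p) ^ 3 * q ^ 1 = - (p ^ 3 * q ^ 1) := by ring
  have e4 : (-p) ^ 4 * q ^ 0 = p ^ 4 * q ^ 0 := by ring
  obtain ⟨a, b, c, d, e⟩ := w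
  refine ⟨?_, ?_, ?_, ?_, ?_⟩
  · rw [e0, h0]; rfl
  · rw [e1, map_neg, h1]; exact (Int.cast_neg _).symm
  · rw [e2, h2]; rfl
  · rw [e3, map_neg, h3]; exact (Int.cast_neg _).symm
  · rw [e4, h4]; rfl

theorem HasW.inv {f : K} {w : W5} (h : HasW f w) (hf : f ≠ 0) : HasW f⁻¹ w.inv := by
  obtain ⟨p, q, hr, h0, h1, h2, h3, h4⟩ := h
  refine ⟨_, _, hr.inv hf, ?_⟩
  obtain ⟨a, b, c, d, e⟩ := w
  refine ⟨?_, ?_, ?_, ?_, ?_⟩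
  · rw [mul_comm]; exact h4
  · rw [mul_comm]; exact h3
  · rw [mul_comm]; exact h2
  · rw [mul_comm]; exact h1
  · rw [mul_comm]; exact h0

theorem HasW.mul {f g : K} {w v : W5} (h : HasW f w) (h' : HasW g v) (hf : f ≠ 0) (hg : g ≠ 0)
    (hd : Disjoint (Vars f) (Vars g)) : HasW (f * g) (w.mul v) := by
  obtain ⟨p, q, hr, h0, h1, h2, h3, h4⟩ := h
  obtain ⟨r, s, hr', h0', h1', h2', h3', h4'⟩ := h'
  have hdd := hr.disj hr' hd
  refine ⟨_, _, hr.mul hr' hf hg hd, ?_⟩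
  have key : ∀ i j, EE ((p * r) ^ i * (q * s) ^ j) = EE (p ^ i * q ^ j) * EE (r ^ i * s ^ j) := by
    intro i j
    rw [← EE_mul' hdd]
    congr 1
    ring
  obtain ⟨a, b, c, d, e⟩ := w
  obtain ⟨a', b', c', d', e'⟩ := v
  refine ⟨?_, ?_, ?_, ?_, ?_⟩ <;> rw [key]
  · rw [h0, h0']; exact (Int.cast_mul _ _).symm
  · rw [h1, h1']; exact (Int.cast_mul _ _).symm
  · rw [h2, h2']; exact (Int.cast_mul _ _).symm
  · rw [h3, h3']; exact (Int.cast_mul _ _).symm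
  · rw [h4, h4']; exact (Int.cast_mul _ _).symm

theorem HasW.add {f g : K} {w v : W5} (h : HasW f w) (h' : HasW g v)
    (hd : Disjoint (Vars f) (Vars g)) : HasW (f + g) (w.add v) := by
  obtain ⟨p, q, hr, h0, h1, h2, h3, h4⟩ := h
  obtain ⟨r, s, hr', h0', h1', h2', h3', h4'⟩ := h'
  have hdd := hr.disj hr' hd
  refine ⟨_, _, hr.add hr' hd, ?_⟩
  obtain ⟨a, b, c, d, e⟩ := w
  obtain ⟨a', b', c', d', e'⟩ := v
  have e0 : (p * s + q * r) ^ 0 * (q * s) ^ 4 = (p ^ 0 * q ^ 4) * (r ^ 0 * s ^ 4) := by ring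
  have e1 : (p * s + q * r) ^ 1 * (q * s) ^ 3 =
      (p ^ 0 * q ^ 4) * (r ^ 1 * s ^ 3) + (p ^ 1 * q ^ 3) * (r ^ 0 * s ^ 4) := by ring
  have e2 : (p * s + q * r) ^ 2 * (q * s) ^ 2 =
      (p ^ 0 * q ^ 4) * (r ^ 2 * s ^ 2) + (p ^ 2 * q ^ 2) * (r ^ 0 * s ^ 4) +
      2 • ((p ^ 1 * q ^ 3) * (r ^ 1 * s ^ 3)) := by ring
  have e3 : (p * s + q * r) ^ 3 * (q * s) ^ 1 =
      (p ^ 0 * q ^ 4) * (r ^ 3 * s ^ 1) + (p ^ 3 * q ^ 1) * (r ^ 0 * s ^ 4) +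
      3 • ((p ^ 1 * q ^ 3) * (r ^ 2 * s ^ 2) + (p ^ 2 * q ^ 2) * (r ^ 1 * s ^ 3)) := by ring
  have e4 : (p * s + q * r) ^ 4 * (q * s) ^ 0 =
      (p ^ 0 * q ^ 4) * (r ^ 4 * s ^ 0) + (p ^ 4 * q ^ 0) * (r ^ 0 * s ^ 4) +
      4 • ((p ^ 1 * q ^ 3) * (r ^ 3 * s ^ 1) + (p ^ 3 * q ^ 1) * (r ^ 1 * s ^ 3)) +
      6 • ((p ^ 2 * q ^ 2) * (r ^ 2 * s ^ 2)) := by ring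
  refine ⟨?_, ?_, ?_, ?_, ?_⟩
  · rw [e0, EE_mul' hdd, h0, h0']
    change _ = ((a * a' : ℤ) : ℝ)
    push_cast; rfl
  · rw [e1]
    simp only [map_add, EE_mul' hdd, h0, h1, h0', h1']
    change _ = ((a * b' + b * a' : ℤ) : ℝ)
    push_cast; ring
  · rw [e2]
    simp only [map_add, map_nsmul, EE_mul' hdd, h0, h1, h2, h0', h1', h2']
    change _ = ((a * c' + c * a' + 2 * (b * b') : ℤ) : ℝ)
    push_cast; ring
  · rw [e3]
    simp only [map_add, map_nsmul, EE_mul' hdd, h0, h1, h2, h3, h0', h1', h2', h3']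
    change _ = ((a * d' + d * a' + 3 * (b * c' + c * b') : ℤ) : ℝ)
    push_cast; ring
  · rw [e4]
    simp only [map_add, map_nsmul, EE_mul' hdd, h0, h1, h2, h3, h4, h0', h1', h2', h3', h4']
    change _ = ((a * e' + e * a' + 4 * (b * d' + d * b') + 6 * (c * c') : ℤ) : ℝ)
    push_cast; ring

theorem HasW.unique {f : K} {w v : W5} (h : HasW f w) (h' : HasW f v) :
    w.num * v.w0 = v.num * w.w0 := by
  obtain ⟨p, q, hr, h0, h1, h2, h3, h4⟩ := h
  obtain ⟨r, s, hr', h0', h1', h2', h3', h4'⟩ := h'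
  obtain ⟨t, ht, rfl, rfl⟩ := hr.unique hr'
  have key : ∀ i j, EE ((C t * p) ^ i * (C t * q) ^ j) = t ^ (i + j) * EE (p ^ i * q ^ j) := by
    intro i j
    rw [← EE_C_mul]
    congr 1
    rw [C_pow]
    ring
  rw [key] at h0' h1' h2' h3' h4'
  rw [h0] at h0'
  rw [h1] at h1'
  rw [h2] at h2'
  rw [h3] at h3'
  rw [h4] at h4'
  obtain ⟨a, b, c, d, e⟩ := w
  obtain ⟨a', b', c', d', e'⟩ := v
  change (1000000000000000000 * a + ((b + 3 * c) + (7 * d + 11 * e))) * a' =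
    (1000000000000000000 * a' + ((b' + 3 * c') + (7 * d' + 11 * e'))) * a
  simp only at h0' h1' h2' h3' h4'
  have : (((1000000000000000000 * a + ((b + 3 * c) + (7 * d + 11 * e))) * a' : ℤ) : ℝ) =
    (((1000000000000000000 * a' + ((b' + 3 * c') + (7 * d' + 11 * e'))) * a : ℤ) : ℝ) := by
    push_cast
    rw [← h0', ← h1', ← h2', ← h3', ← h4']
    ring
  exact_mod_cast this

/-! ### Shapes and the expressions they denote -/

/-- `f = op g h` with `A g`, `B h` and disjoint variable sets. -/
def DenOp (op : K → K → K) (A B : K → Prop) (f : K) : Prop :=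
  ∃ g h, A g ∧ B h ∧ Disjoint (Vars g) (Vars h) ∧ f = op g h

/-- `Den s f` : the expression `f` has shape `s`. -/
def Den : S → K → Prop
  | .x => fun f => ∃ i, f = Xv i
  | .add a b => DenOp (fun u v => u + v) (Den a) (Den b)
  | .sub a b => DenOp (fun u v => u - v) (Den a) (Den b)
  | .mul a b => DenOp (fun u v => u * v) (Den a) (Den b)
  | .div a b => DenOp (fun u v => u / v) (Den a) (Den b)

/-- The properties of the operations that are used. -/
structure GoodOp (op : K → K → K) : Prop where
  map : ∀ σ a b, permAct σ (op a b) = op (permAct σ a) (permAct σ b)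
  vars : ∀ a b, a ≠ 0 → b ≠ 0 → Disjoint (Vars a) (Vars b) → Vars (op a b) = Vars a ∪ Vars b

theorem good_add : GoodOp (fun u v => u + v) :=
  ⟨fun _ _ _ => map_add _ _ _, fun _ _ _ _ h => Vars_add h⟩
theorem good_sub : GoodOp (fun u v => u - v) :=
  ⟨fun _ _ _ => map_sub _ _ _, fun _ _ _ _ h => Vars_sub h⟩
theorem good_mul : GoodOp (fun u v => u * v) :=
  ⟨fun _ _ _ => map_mul _ _ _, fun _ _ h1 h2 h => Vars_mul h1 h2 h⟩
theorem good_div : GoodOp (fun u v => u / v) :=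
  ⟨fun _ _ _ => map_div₀ _ _ _, fun _ _ h1 h2 h => Vars_div h1 h2 h⟩

/-- The properties of the predicates `Den s`. -/
structure GoodP (A : K → Prop) (n : ℕ) : Prop where
  pos : 0 < n
  card : ∀ f, A f → (Vars f).ncard = n
  perm : ∀ f, A f → ∀ σ, A (permAct σ f)
  iso : ∀ f g, A f → A g → Iso f g
  ex : ∀ T : Finset ℕ, T.card = n → ∃ f, A f ∧ Vars f = T

theorem GoodP.ne_zero {A : K → Prop} {n : ℕ} (h : GoodP A n) {f : K} (hf : A f) : f ≠ 0 := by
  rintro rfl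
  have h1 := h.card _ hf
  rw [Vars_zero, Set.ncard_empty] at h1
  have := h.pos
  omega

theorem exists_perm_extend {A : Set ℕ} (hA : A.Finite) (φ : ℕ → ℕ) (hφ : Set.InjOn φ A) :
    ∃ σ : Equiv.Perm ℕ, ∀ i ∈ A, σ i = φ i := by
  classical
  set T := hA.toFinset with hT
  have hpre := Equiv.Perm.isMultiplyPretransitive ℕ T.card
  let x : Fin T.card ↪ ℕ := ⟨fun k => (T.equivFin.symm k : ℕ), fun a b h => by
    have := Subtype.ext h
    exact T.equivFin.symm.injective this⟩
  have hx : ∀ k, x k ∈ A := fun k => by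
    have : (T.equivFin.symm k : ℕ) ∈ T := (T.equivFin.symm k).2
    exact hA.mem_toFinset.1 this
  let y : Fin T.card ↪ ℕ := ⟨fun k => φ (x k), fun a b h => x.injective (hφ (hx a) (hx b) h)⟩
  obtain ⟨σ, hσ⟩ := hpre.exists_smul_eq x y
  refine ⟨σ, fun i hi => ?_⟩
  have hi' : i ∈ T := by rw [hT]; exact hA.mem_toFinset.2 hi
  have hxi : x (T.equivFin ⟨i, hi'⟩) = i := by
    change ((T.equivFin.symm (T.equivFin ⟨i, hi'⟩) : T) : ℕ) = i
    rw [Equiv.symm_apply_apply]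
  have := DFunLike.congr_fun hσ (T.equivFin ⟨i, hi'⟩)
  rw [Function.Embedding.smul_apply] at this
  change σ (x _) = φ (x _) at this
  rwa [hxi] at this

theorem GoodP.op {op : K → K → K} (ho : GoodOp op) {A B : K → Prop} {m n : ℕ} (hA : GoodP A m)
    (hB : GoodP B n) : GoodP (DenOp op A B) (m + n) := by
  classical
  refine ⟨Nat.add_pos_left hA.pos _, ?_, ?_, ?_, ?_⟩
  · rintro f ⟨g, h, hg, hh, hd, rfl⟩
    rw [ho.vars _ _ (hA.ne_zero hg) (hB.ne_zero hh) hd,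
      Set.ncard_union_eq hd (Vars_finite _) (Vars_finite _), hA.card _ hg, hB.card _ hh]
  · rintro f ⟨g, h, hg, hh, hd, rfl⟩ σ
    refine ⟨permAct σ g, permAct σ h, hA.perm _ hg σ, hB.perm _ hh σ, ?_, ho.map _ _ _⟩
    rw [Vars_perm, Vars_perm]
    exact (Set.disjoint_image_iff σ.injective).2 hd
  · rintro f f' ⟨g, h, hg, hh, hd, rfl⟩ ⟨g', h', hg', hh', hd', rfl⟩
    obtain ⟨σ, rfl⟩ := hA.iso _ _ hg hg'
    obtain ⟨τ, rfl⟩ := hB.iso _ _ hh hh'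
    rw [Vars_perm, Vars_perm] at hd'
    obtain ⟨ρ, hρ⟩ := exists_perm_extend ((Vars_finite g).union (Vars_finite h))
      (fun i => if i ∈ Vars g then σ i else τ i) (by
        intro i hi j hj hij
        simp only at hij
        split_ifs at hij with h1 h2 h2
        · exact σ.injective hij
        · exact absurd (hij ▸ Set.mem_image_of_mem σ h1)
            (Set.disjoint_right.1 hd' (Set.mem_image_of_mem τ (hj.resolve_left h2)))
        · exact absurd (hij ▸ Set.mem_image_of_mem σ h2)
            (Set.disjoint_right.1 hd' (Set.mem_image_of_mem τ (hi.resolve_left h1)))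
        · exact τ.injective hij)
    refine ⟨ρ, ?_⟩
    rw [ho.map]
    congr 1
    · apply permAct_congr
      intro i hi
      rw [hρ i (Or.inl hi), if_pos hi]
    · apply permAct_congr
      intro i hi
      rw [hρ i (Or.inr hi), if_neg (Set.disjoint_right.1 hd hi)]
  · intro T hT
    obtain ⟨U, hU, hUc⟩ := Finset.exists_subset_card_eq (s := T) (n := m) (by omega)
    obtain ⟨g, hg, hgv⟩ := hA.ex U hUc
    obtain ⟨h, hh, hhv⟩ := hB.ex (T \ U) (by rw [Finset.card_sdiff_of_subset hU]; omega)
    have hd : Disjoint (Vars g) (Vars h) := by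
      rw [hgv, hhv]
      exact_mod_cast Finset.disjoint_sdiff
    refine ⟨op g h, ⟨g, h, hg, hh, hd, rfl⟩, ?_⟩
    rw [ho.vars _ _ (hA.ne_zero hg) (hB.ne_zero hh) hd, hgv, hhv, ← Finset.coe_union,
      Finset.union_sdiff_of_subset hU]

theorem den_good (s : S) : GoodP (Den s) s.size := by
  induction s with
  | x =>
    refine ⟨Nat.one_pos, ?_, ?_, ?_, ?_⟩
    · rintro f ⟨i, rfl⟩
      rw [Vars_X, Set.ncard_singleton]; rfl
    · rintro f ⟨i, rfl⟩ σ
      exact ⟨σ i, permAct_X _ _⟩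
    · rintro f g ⟨i, rfl⟩ ⟨j, rfl⟩
      exact ⟨Equiv.swap i j, by rw [permAct_X, Equiv.swap_apply_left]⟩
    · intro T hT
      obtain ⟨i, rfl⟩ := Finset.card_eq_one.1 hT
      exact ⟨Xv i, ⟨i, rfl⟩, by rw [Vars_X, Finset.coe_singleton]⟩
  | add a b ha hb => exact GoodP.op good_add ha hb
  | sub a b ha hb => exact GoodP.op good_sub ha hb
  | mul a b ha hb => exact GoodP.op good_mul ha hb
  | div a b ha hb => exact GoodP.op good_div ha hb

theorem Den.ne_zero {s : S} {f : K} (h : Den s f) : f ≠ 0 := (den_good s).ne_zero h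

theorem Den.isAE {s : S} {f : K} (h : Den s f) : IsAE f := by
  induction s generalizing f with
  | x => obtain ⟨i, rfl⟩ := h; exact IsAE.var i
  | add a b ha hb => obtain ⟨g, k, hg, hk, hd, rfl⟩ := h; exact IsAE.add (ha hg) (hb hk) hd
  | sub a b ha hb => obtain ⟨g, k, hg, hk, hd, rfl⟩ := h; exact IsAE.sub (ha hg) (hb hk) hd
  | mul a b ha hb => obtain ⟨g, k, hg, hk, hd, rfl⟩ := h; exact IsAE.mul (ha hg) (hb hk) hd
  | div a b ha hb => obtain ⟨g, k, hg, hk, hd, rfl⟩ := h; exact IsAE.div (ha hg) (hb hk) hd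

theorem Den.classOf {s : S} {f : K} (h : Den s f) : classOf f = {g | Den s g} := by
  ext g
  constructor
  · rintro ⟨σ, rfl⟩
    exact (den_good s).perm _ h σ
  · intro hg
    exact (den_good s).iso _ _ h hg

theorem forceNat_eq {β : Type} (n : ℕ) (k : ℕ → β) : forceNat n k = k n := by
  cases n <;> rfl

theorem forceInt_eq {β : Type} (n : ℤ) (k : ℤ → β) : forceInt n k = k n := by
  cases n <;> simp only [forceInt, forceNat_eq]

theorem W5.force_eq {β : Type} (w : W5) (k : W5 → β) : w.force k = k w := by
  cases w; simp only [W5.force, forceInt_eq]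

theorem Den.hasW {s : S} {f : K} (h : Den s f) : HasW f s.W := by
  induction s generalizing f with
  | x => obtain ⟨i, rfl⟩ := h; exact HasW.xv i
  | add a b ha hb =>
    obtain ⟨g, k, hg, hk, hd, rfl⟩ := h
    simp only [S.W, W5.force_eq]
    exact (ha hg).add (hb hk) hd
  | sub a b ha hb =>
    obtain ⟨g, k, hg, hk, hd, rfl⟩ := h
    simp only [S.W, W5.force_eq, sub_eq_add_neg]
    exact (ha hg).add (hb hk).neg (by rwa [Vars_neg])
  | mul a b ha hb =>
    obtain ⟨g, k, hg, hk, hd, rfl⟩ := h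
    simp only [S.W, W5.force_eq]
    exact (ha hg).mul (hb hk) hg.ne_zero hk.ne_zero hd
  | div a b ha hb =>
    obtain ⟨g, k, hg, hk, hd, rfl⟩ := h
    simp only [S.W, W5.force_eq, div_eq_mul_inv]
    exact (ha hg).mul ((hb hk).inv hk.ne_zero) hg.ne_zero (inv_ne_zero hk.ne_zero)
      (by rwa [Vars_inv])

/-! ### Soundness of the normalization -/

def LeS (a b : S) : Prop := ∀ f, Den a f → Den b f

def NLe (a b : S) : Prop := ∀ f, Den a f → Den b (-f)

/-- `st` denotes `f`, up to the recorded sign -/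
def SD (st : S × Bool) (f : K) : Prop := Den st.1 (if st.2 then -f else f)

def SLe (a : S) (st : S × Bool) : Prop := ∀ f, Den a f → SD st f

def SoundNg (ng : S → Option S) : Prop := ∀ u u', ng u = some u' → NLe u u'

theorem LeS.rfl' {a : S} : LeS a a := fun _ h => h
theorem LeS.trans {a b c : S} (h : LeS a b) (h' : LeS b c) : LeS a c := fun _ hf => h' _ (h _ hf)

theorem DenOp.mono {op : K → K → K} {A B A' B' : K → Prop} {f : K} (h : DenOp op A B f)
    (hA : ∀ f, A f → A' f) (hB : ∀ f, B f → B' f) : DenOp op A' B' f := by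
  obtain ⟨g, k, hg, hk, hd, rfl⟩ := h
  exact ⟨g, k, hA _ hg, hB _ hk, hd, rfl⟩

theorem LeS.add {a b a' b' : S} (h : LeS a a') (h' : LeS b b') : LeS (.add a b) (.add a' b') :=
  fun _ hf => DenOp.mono hf h h'
theorem LeS.sub {a b a' b' : S} (h : LeS a a') (h' : LeS b b') : LeS (.sub a b) (.sub a' b') :=
  fun _ hf => DenOp.mono hf h h'
theorem LeS.mul {a b a' b' : S} (h : LeS a a') (h' : LeS b b') : LeS (.mul a b) (.mul a' b') :=
  fun _ hf => DenOp.mono hf h h'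
theorem LeS.div {a b a' b' : S} (h : LeS a a') (h' : LeS b b') : LeS (.div a b) (.div a' b') :=
  fun _ hf => DenOp.mono hf h h'

theorem denOp_comm {op op' : K → K → K} {A B : K → Prop} (h : ∀ a b, op a b = op' b a) {f : K}
    (hf : DenOp op A B f) : DenOp op' B A f := by
  obtain ⟨g, k, hg, hk, hd, rfl⟩ := hf
  exact ⟨k, g, hk, hg, hd.symm, h _ _⟩

theorem denOp_left {o1 o2 o3 o4 : K → K → K} (g2 : GoodOp o2) (g4 : GoodOp o4) {a b c : S}
    (h : ∀ x y z, o1 (o2 x y) z = o3 x (o4 y z)) {f : K}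
    (hf : DenOp o1 (DenOp o2 (Den a) (Den b)) (Den c) f) :
    DenOp o3 (Den a) (DenOp o4 (Den b) (Den c)) f := by
  obtain ⟨_, z, ⟨x, y, hx, hy, hd, rfl⟩, hz, hd', rfl⟩ := hf
  rw [g2.vars _ _ hx.ne_zero hy.ne_zero hd, Set.disjoint_union_left] at hd'
  refine ⟨x, _, hx, ⟨y, z, hy, hz, hd'.2, rfl⟩, ?_, h _ _ _⟩
  rw [g4.vars _ _ hy.ne_zero hz.ne_zero hd'.2, Set.disjoint_union_right]
  exact ⟨hd, hd'.1⟩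

theorem denOp_right {o1 o2 o3 o4 : K → K → K} (g2 : GoodOp o2) (g4 : GoodOp o4) {a b c : S}
    (h : ∀ x y z, o1 x (o2 y z) = o3 (o4 x y) z) {f : K}
    (hf : DenOp o1 (Den a) (DenOp o2 (Den b) (Den c)) f) :
    DenOp o3 (DenOp o4 (Den a) (Den b)) (Den c) f := by
  obtain ⟨x, _, hx, ⟨y, z, hy, hz, hd, rfl⟩, hd', rfl⟩ := hf
  rw [g2.vars _ _ hy.ne_zero hz.ne_zero hd, Set.disjoint_union_right] at hd'
  refine ⟨_, z, ⟨x, y, hx, hy, hd'.1, rfl⟩, hz, ?_, h _ _ _⟩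
  rw [g4.vars _ _ hx.ne_zero hy.ne_zero hd'.1, Set.disjoint_union_left]
  exact ⟨hd'.2, hd⟩

theorem denOp_swap {o1 o2 o3 o4 : K → K → K} (g2 : GoodOp o2) (g4 : GoodOp o4) {a b c : S}
    (h : ∀ x y z, o1 (o2 x y) z = o3 (o4 x z) y) {f : K}
    (hf : DenOp o1 (DenOp o2 (Den a) (Den b)) (Den c) f) :
    DenOp o3 (DenOp o4 (Den a) (Den c)) (Den b) f := by
  obtain ⟨_, z, ⟨x, y, hx, hy, hd, rfl⟩, hz, hd', rfl⟩ := hf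
  rw [g2.vars _ _ hx.ne_zero hy.ne_zero hd, Set.disjoint_union_left] at hd'
  refine ⟨_, y, ⟨x, z, hx, hz, hd'.1, rfl⟩, hy, ?_, h _ _ _⟩
  rw [g4.vars _ _ hx.ne_zero hz.ne_zero hd'.1, Set.disjoint_union_left]
  exact ⟨hd, hd'.2.symm⟩

theorem denOp_swap' {o1 o2 o3 o4 : K → K → K} (g2 : GoodOp o2) (g4 : GoodOp o4) {a b c : S}
    (h : ∀ x y z, o1 x (o2 y z) = o3 (o4 x z) y) {f : K}
    (hf : DenOp o1 (Den a) (DenOp o2 (Den b) (Den c)) f) :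
    DenOp o3 (DenOp o4 (Den a) (Den c)) (Den b) f := by
  obtain ⟨x, _, hx, ⟨y, z, hy, hz, hd, rfl⟩, hd', rfl⟩ := hf
  rw [g2.vars _ _ hy.ne_zero hz.ne_zero hd, Set.disjoint_union_right] at hd'
  refine ⟨_, y, ⟨x, z, hx, hz, hd'.2, rfl⟩, hy, ?_, h _ _ _⟩
  rw [g4.vars _ _ hx.ne_zero hz.ne_zero hd'.2, Set.disjoint_union_left]
  exact ⟨hd'.1, hd.symm⟩

section rules
variable (a b c : S)

theorem add_commS : LeS (.add a b) (.add b a) := fun _ hf => denOp_comm (fun _ _ => add_comm _ _) hf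
theorem mul_commS : LeS (.mul a b) (.mul b a) := fun _ hf => denOp_comm (fun _ _ => mul_comm _ _) hf
theorem add_left_commS : LeS (.add a (.add b c)) (.add b (.add a c)) := fun _ hf =>
  denOp_comm (fun _ _ => add_comm _ _)
    (denOp_swap' good_add good_add (o3 := fun u v => u + v) (fun _ _ _ => by ring) hf)
theorem mul_left_commS : LeS (.mul a (.mul b c)) (.mul b (.mul a c)) := fun _ hf =>
  denOp_comm (fun _ _ => mul_comm _ _)
    (denOp_swap' good_mul good_mul (o3 := fun u v => u * v) (fun _ _ _ => by ring) hf)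
theorem mul_assocS : LeS (.mul a (.mul b c)) (.mul (.mul a b) c) := fun _ hf =>
  denOp_right good_mul good_mul (fun _ _ _ => by ring) hf
theorem add_subS : LeS (.add a (.sub b c)) (.sub (.add a b) c) := fun _ hf =>
  denOp_right good_sub good_add (fun _ _ _ => by ring) hf
theorem sub_addS : LeS (.add (.sub a b) c) (.sub (.add a c) b) := fun _ hf =>
  denOp_swap good_sub good_add (fun _ _ _ => by ring) hf
theorem sub_sub_leftS : LeS (.sub (.sub a b) c) (.sub a (.add b c)) := fun _ hf =>
  denOp_left good_sub good_add (fun _ _ _ => by ring) hf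
theorem sub_addS' : LeS (.sub a (.add b c)) (.sub (.sub a b) c) := fun _ hf =>
  denOp_right good_add good_sub (fun _ _ _ => by ring) hf
theorem sub_sub_rightS : LeS (.sub a (.sub b c)) (.sub (.add a c) b) := fun _ hf =>
  denOp_swap' good_sub good_add (fun _ _ _ => by ring) hf
theorem mul_divS : LeS (.mul a (.div b c)) (.div (.mul a b) c) := fun _ hf =>
  denOp_right good_div good_mul (fun _ _ _ => by ring) hf
theorem div_divS : LeS (.div (.div a b) c) (.div a (.mul b c)) := fun _ hf =>
  denOp_left good_div good_mul (fun _ _ _ => by rw [div_div]) hf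
theorem div_mulS : LeS (.div a (.mul b c)) (.div (.div a b) c) := fun _ hf =>
  denOp_right good_mul good_div (fun _ _ _ => by rw [div_div]) hf
theorem div_div_rightS : LeS (.div a (.div b c)) (.mul (.div a b) c) := fun _ hf =>
  denOp_right good_div good_div (fun x y z => by
    rw [div_div_eq_mul_div, div_mul_eq_mul_div]) hf

end rules

namespace S

theorem insA_le (t c : S) : LeS (add t c) (insA t c) := by
  fun_induction insA t c with
  | case1 u v h => exact LeS.rfl'
  | case2 u v h ih => exact (add_left_commS _ _ _).trans (LeS.add LeS.rfl' ih)
  | case3 => exact LeS.rfl'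
  | case4 => exact add_commS _ _

theorem mergeA_le (d c : S) : LeS (add d c) (mergeA d c) := by
  fun_induction mergeA d c with
  | case1 u v ih => exact ((add_left_commS _ _ _).trans (LeS.add LeS.rfl' ih)).trans (insA_le _ _)
  | case2 c => exact (add_commS _ _).trans (insA_le _ _)

theorem insM_le (t c : S) : LeS (mul t c) (insM t c) := by
  fun_induction insM t c with
  | case1 u v h => exact LeS.rfl'
  | case2 u v h ih => exact (mul_left_commS _ _ _).trans (LeS.mul LeS.rfl' ih)
  | case3 => exact LeS.rfl'
  | case4 => exact mul_commS _ _

theorem addR_le (a b : S) : LeS (add a b) (addR a b) := by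
  fun_cases addR a b with
  | case1 b1 b2 => exact (add_subS _ _ _).trans (LeS.sub (mergeA_le _ _) LeS.rfl')
  | case2 => exact mergeA_le _ _

theorem addN_le (a b : S) : LeS (add a b) (addN a b) := by
  fun_cases addN a b with
  | case1 a1 a2 b1 b2 =>
    refine (sub_addS _ _ _).trans ?_
    refine (LeS.sub (add_subS _ _ _) LeS.rfl').trans ?_
    refine (sub_sub_leftS _ _ _).trans ?_
    exact LeS.sub (mergeA_le _ _) ((add_commS _ _).trans (mergeA_le _ _))
  | case2 a1 a2 => exact (sub_addS _ _ _).trans (LeS.sub (mergeA_le _ _) LeS.rfl')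
  | case3 => exact addR_le _ _

theorem subF_le (t a : S) : LeS (sub a t) (subF t a) := by
  fun_cases subF t a with
  | case1 a1 a2 =>
    exact (sub_sub_leftS _ _ _).trans (LeS.sub LeS.rfl' ((add_commS _ _).trans (insA_le _ _)))
  | case2 => exact LeS.rfl'

theorem sub_of_nle {a t t' : S} (h : NLe t t') : LeS (sub a t) (add a t') := by
  rintro _ ⟨g, k, hg, hk, hd, rfl⟩
  exact ⟨g, -k, hg, h _ hk, by rwa [Vars_neg], sub_eq_add_neg _ _⟩

theorem subTerm_le {ng : S → Option S} (hn : SoundNg ng) (a t : S) : LeS (sub a t) (subTerm ng a t) := by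
  fun_cases subTerm ng a t with
  | case1 t' h => exact (sub_of_nle (hn _ _ h)).trans (addN_le _ _)
  | case2 => exact subF_le _ _

theorem subComb_le {ng : S → Option S} (hn : SoundNg ng) (c a : S) : LeS (sub a c) (subComb ng c a) := by
  fun_induction subComb ng c a with
  | case1 u v a ih =>
    exact ((sub_addS' _ _ _).trans (LeS.sub (subTerm_le hn _ _) LeS.rfl')).trans ih
  | case2 => exact subTerm_le hn _ _

theorem subN_le {ng : S → Option S} (hn : SoundNg ng) (a b : S) : LeS (sub a b) (subN ng a b) := by
  fun_cases subN ng a b with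
  | case1 b1 b2 =>
    exact ((sub_sub_rightS _ _ _).trans (LeS.sub (addN_le _ _) LeS.rfl')).trans (subComb_le hn _ _)
  | case2 => exact subComb_le hn _ _

theorem nle_add_left {u v u' : S} (h : NLe u u') : NLe (add u v) (sub u' v) := by
  rintro _ ⟨g, k, hg, hk, hd, rfl⟩
  exact ⟨-g, k, h _ hg, hk, by rwa [Vars_neg], by ring⟩

theorem NLe.trans {a b c : S} (h : NLe a b) (h' : LeS b c) : NLe a c := fun _ hf => h' _ (h _ hf)

theorem LeS.nle {a b c : S} (h : LeS a b) (h' : NLe b c) : NLe a c := fun _ hf => h' _ (h _ hf)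

theorem LeS.sle {a b : S} {st : S × Bool} (h : LeS a b) (h' : SLe b st) : SLe a st :=
  fun _ hf => h' _ (h _ hf)

theorem negA_sound {ng : S → Option S} (hn : SoundNg ng) : SoundNg (negA ng) := by
  intro u
  fun_induction negA ng u with
  | case1 u v u' h =>
    rintro _ ⟨⟩
    exact NLe.trans (nle_add_left (hn _ _ h)) (subComb_le hn _ _)
  | case2 u v h w h' ih =>
    rintro _ ⟨⟩
    exact NLe.trans (LeS.nle (add_commS _ _) (nle_add_left (ih _ h'))) (subTerm_le hn _ _)
  | case3 => rintro _ ⟨⟩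
  | case4 u => exact hn u

theorem absS_sle {ng : S → Option S} (hn : SoundNg ng) (u : S) : SLe u (absS ng u) := by
  intro f hf
  fun_cases absS ng u with
  | case1 => exact hf
  | case2 u' h h' => exact hf
  | case3 u' h h' => exact hn _ _ h _ hf

theorem mulP_le (u p : S) : LeS (mul u p) (mulP u p) := by
  fun_cases mulP u p with
  | case1 a b => exact (mul_divS _ _ _).trans (LeS.div (insM_le _ _) LeS.rfl')
  | case2 => exact insM_le _ _

theorem divP_le (u p : S) : LeS (div p u) (divP u p) := by
  fun_cases divP u p with
  | case1 a b =>
    exact (div_divS _ _ _).trans (LeS.div LeS.rfl' ((mul_commS _ _).trans (insM_le _ _)))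
  | case2 => exact LeS.rfl'

theorem mulF_sle {ng : S → Option S} (hn : SoundNg ng) (u a : S) (st : S × Bool) (h : SLe a st) :
    SLe (mul a u) (mulF ng u st) := by
  rintro _ ⟨g, k, hg, hk, hd, rfl⟩
  have h1 := h _ hg
  have h2 := absS_sle hn u _ hk
  obtain ⟨p, s⟩ := st
  unfold mulF
  generalize absS ng u = au at h2 ⊢
  obtain ⟨u', e⟩ := au
  change SD (mulP u' p, xor e s) _
  apply mulP_le
  refine ⟨_, _, h2, h1, ?_, ?_⟩
  · cases e <;> cases s <;> simpa [Vars_neg] using hd.symm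
  · cases e <;> cases s <;> simp [mul_comm]

theorem divF_sle {ng : S → Option S} (hn : SoundNg ng) (u a : S) (st : S × Bool) (h : SLe a st) :
    SLe (div a u) (divF ng u st) := by
  rintro _ ⟨g, k, hg, hk, hd, rfl⟩
  have h1 := h _ hg
  have h2 := absS_sle hn u _ hk
  obtain ⟨p, s⟩ := st
  unfold divF
  generalize absS ng u = au at h2 ⊢
  obtain ⟨u', e⟩ := au
  change SD (divP u' p, xor e s) _
  apply divP_le
  refine ⟨_, _, h1, h2, ?_, ?_⟩
  · cases e <;> cases s <;> simpa [Vars_neg] using hd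
  · cases e <;> cases s <;> simp [neg_div, div_neg]

theorem mulC_sle {ng : S → Option S} (hn : SoundNg ng) (c a : S) (st : S × Bool) (h : SLe a st) :
    SLe (mul a c) (mulC ng c st) := by
  fun_induction mulC ng c st generalizing a with
  | case1 u v st ih => exact LeS.sle (mul_assocS _ _ _) (ih _ (mulF_sle hn _ _ _ h))
  | case2 => exact mulF_sle hn _ _ _ h

theorem divC_sle {ng : S → Option S} (hn : SoundNg ng) (c a : S) (st : S × Bool) (h : SLe a st) :
    SLe (div a c) (divC ng c st) := by
  fun_induction divC ng c st generalizing a with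
  | case1 u v st ih => exact LeS.sle (div_mulS _ _ _) (ih _ (divF_sle hn _ _ _ h))
  | case2 => exact divF_sle hn _ _ _ h

theorem initC_sle {ng : S → Option S} (hn : SoundNg ng) (a : S) : SLe a (initC ng a) := by
  fun_cases initC ng a with
  | case1 u v => exact mulC_sle hn _ _ _ (absS_sle hn _)
  | case2 => exact absS_sle hn _

theorem initP_sle {ng : S → Option S} (hn : SoundNg ng) (a : S) : SLe a (initP ng a) := by
  fun_cases initP ng a with
  | case1 u v => exact divC_sle hn _ _ _ (initC_sle hn _)
  | case2 => exact initC_sle hn _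

theorem mulT_sle {ng : S → Option S} (hn : SoundNg ng) (b a : S) (st : S × Bool) (h : SLe a st) :
    SLe (mul a b) (mulT ng st b) := by
  fun_cases mulT ng st b with
  | case1 u v => exact LeS.sle (mul_divS _ _ _) (divC_sle hn _ _ _ (mulC_sle hn _ _ _ h))
  | case2 => exact mulC_sle hn _ _ _ h

theorem divT_sle {ng : S → Option S} (hn : SoundNg ng) (b a : S) (st : S × Bool) (h : SLe a st) :
    SLe (div a b) (divT ng st b) := by
  fun_cases divT ng st b with
  | case1 u v => exact LeS.sle (div_div_rightS _ _ _) (mulC_sle hn _ _ _ (divC_sle hn _ _ _ h))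
  | case2 => exact divC_sle hn _ _ _ h

theorem nle_mul_left {u v u' : S} (h : NLe u u') : NLe (mul u v) (mul u' v) := by
  rintro _ ⟨g, k, hg, hk, hd, rfl⟩
  exact ⟨-g, k, h _ hg, hk, by rwa [Vars_neg], by ring⟩

theorem nle_mul_right {u v v' : S} (h : NLe v v') : NLe (mul u v) (mul u v') := by
  rintro _ ⟨g, k, hg, hk, hd, rfl⟩
  exact ⟨g, -k, hg, h _ hk, by rwa [Vars_neg], by ring⟩

theorem nle_div_left {u v u' : S} (h : NLe u u') : NLe (div u v) (div u' v) := by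
  rintro _ ⟨g, k, hg, hk, hd, rfl⟩
  exact ⟨-g, k, h _ hg, hk, by rwa [Vars_neg], by ring⟩

theorem nle_div_right {u v v' : S} (h : NLe v v') : NLe (div u v) (div u v') := by
  rintro _ ⟨g, k, hg, hk, hd, rfl⟩
  exact ⟨g, -k, hg, h _ hk, by rwa [Vars_neg], by simp [div_neg]⟩

theorem negM_sound {ng : S → Option S} (hn : SoundNg ng) : SoundNg (negM ng) := by
  intro u
  fun_induction negM ng u with
  | case1 u v u' h =>
    rintro _ ⟨⟩
    exact nle_mul_left (hn _ _ h)
  | case2 u v h w h' ih =>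
    rintro _ ⟨⟩
    exact nle_mul_right (ih _ h')
  | case3 => rintro _ ⟨⟩
  | case4 u => exact hn u

theorem negP_sound {ng : S → Option S} (hn : SoundNg ng) : SoundNg (negP ng) := by
  intro u
  fun_cases negP ng u with
  | case1 u v u' h =>
    rintro _ ⟨⟩
    exact nle_div_left (negM_sound hn _ _ h)
  | case2 u v h w h' =>
    rintro _ ⟨⟩
    exact nle_div_right (negM_sound hn _ _ h')
  | case3 => rintro _ ⟨⟩
  | case4 => exact negM_sound hn u

theorem ngC_sound {ng : S → Option S} (hn : SoundNg ng) : SoundNg (ngC ng) := by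
  intro u
  fun_cases ngC ng u with
  | case1 u' h h' => rintro _ ⟨⟩; exact hn _ _ h
  | case2 u' h h' => rintro _ ⟨⟩
  | case3 => rintro _ ⟨⟩

theorem fin_sound {ng : S → Option S} (hn : SoundNg ng) (st : S × Bool) (f : K) (h : SD st f)
    (p' : S) (hp : fin ng st = some p') : Den p' f := by
  revert hp
  fun_cases fin ng st with
  | case1 p => rintro ⟨⟩; exact h
  | case2 p q hq =>
    rintro ⟨⟩
    have := negP_sound (ngC_sound hn) _ _ hq _ h
    simpa using this
  | case3 p hq =>
    intro hp
    have := negP_sound hn _ _ hp _ h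
    simpa using this

theorem SD.not {st : S × Bool} {f : K} (h : SD st f) : SD (st.1, !st.2) (-f) := by
  obtain ⟨p, s⟩ := st
  cases s <;> simpa [SD] using h

theorem negStep_sound {ng : S → Option S} (hn : SoundNg ng) : SoundNg (negStep ng) := by
  intro u u' h f hf
  cases u with
  | x => cases h
  | add a b => exact negA_sound hn _ _ h _ hf
  | sub a b =>
    cases h
    apply subComb_le hn
    exact DenOp.mono (denOp_comm (op := fun u v => v - u) (fun _ _ => rfl) (by
      obtain ⟨g, k, hg, hk, hd, rfl⟩ := hf
      exact ⟨g, k, hg, hk, hd, by simp⟩)) LeS.rfl' LeS.rfl'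
  | mul a b => exact fin_sound hn _ _ (SD.not (initP_sle hn _ _ hf)) _ h
  | div a b => exact fin_sound hn _ _ (SD.not (initP_sle hn _ _ hf)) _ h

theorem neg_sound (n : ℕ) : SoundNg (neg n) := by
  induction n with
  | zero => intro u u' h; cases h
  | succ n ih => exact negStep_sound ih

theorem ngg_sound : SoundNg ngg := neg_sound 5

theorem mulN_le (a b : S) : LeS (mul a b) (mulN a b) := by
  intro f hf
  fun_cases mulN a b with
  | case1 t h => exact fin_sound ngg_sound _ _ (mulT_sle ngg_sound _ _ _ (initP_sle ngg_sound _) _ hf) _ h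
  | case2 => exact hf

theorem divN_le (a b : S) : LeS (div a b) (divN a b) := by
  intro f hf
  fun_cases divN a b with
  | case1 t h => exact fin_sound ngg_sound _ _ (divT_sle ngg_sound _ _ _ (initP_sle ngg_sound _) _ hf) _ h
  | case2 => exact hf

end S

/-! ### Correctness of the tables -/

theorem S.force_eq {β : Type} (s : S) (k : S → β) : s.force k = k s := by
  induction s generalizing k with
  | x => rfl
  | add a b ha hb => exact (ha _).trans (hb _)
  | sub a b ha hb => exact (ha _).trans (hb _)
  | mul a b ha hb => exact (ha _).trans (hb _)
  | div a b ha hb => exact (ha _).trans (hb _)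

theorem forceL_eq {α β : Type} (l : List α) (k : List α → β) : forceL l k = k l := by
  induction l generalizing k with
  | nil => rfl
  | cons a l ih => exact ih _

theorem BT.force_eq {α β : Type} (t : BT α) (k : BT α → β) : t.force k = k t := by
  cases t <;> rfl

theorem BT.flatF_eq {α β : Type} (t : BT α) (acc : List α) (k : List α → β) :
    t.flatF acc k = k (t.flat acc) := by
  induction t generalizing acc k with
  | nil => rfl
  | node l y r hl hr => rw [BT.flatF, hr, hl]; rfl

/-- membership in a tree -/
def BT.In {α : Type} (z : α) : BT α → Prop
  | nil => False
  | node l y r => BT.In z l ∨ z = y ∨ BT.In z r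

theorem BT.mem_flat {α : Type} (z : α) (t : BT α) (acc : List α) :
    z ∈ t.flat acc ↔ t.In z ∨ z ∈ acc := by
  induction t generalizing acc with
  | nil => simp [BT.flat, BT.In]
  | node l y r hl hr =>
    rw [BT.flat, hl, List.mem_cons, hr, BT.In]
    tauto

theorem BT.ins_spec {α : Type} [DecidableEq α] (lt : α → α → Bool) (z : α) (t : BT α) :
    ∃ l y r, BT.ins lt z t = node l y r ∧
      ∀ w, BT.In w (node l y r) ↔ w = z ∨ BT.In w t := by
  induction t with
  | nil => exact ⟨nil, z, nil, rfl, fun w => by simp [BT.In]⟩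
  | node l y r hl hr =>
    obtain ⟨l1, y1, r1, e1, h1⟩ := hl
    obtain ⟨l2, y2, r2, e2, h2⟩ := hr
    cases hzy : lt z y with
    | true =>
      refine ⟨node l1 y1 r1, y, r, ?_, fun w => ?_⟩
      · unfold BT.ins at e1 ⊢
        simp only [hzy, e1]
      · rw [BT.In, h1 w, BT.In]; tauto
    | false =>
      cases hyz : lt y z with
      | true =>
        refine ⟨l, y, node l2 y2 r2, ?_, fun w => ?_⟩
        · unfold BT.ins at e2 ⊢
          simp only [hzy, hyz, e2]
        · rw [BT.In, h2 w, BT.In]; tauto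
      | false =>
        by_cases hd : z = y
        · refine ⟨l, y, r, ?_, fun w => ?_⟩
          · unfold BT.ins
            simp only [hzy, hyz]
            cases h : decEq z y with
            | isTrue _ => rfl
            | isFalse h' => exact absurd hd h'
          · rw [BT.In, hd]; tauto
        · refine ⟨node l y r, z, nil, ?_, fun w => ?_⟩
          · unfold BT.ins
            simp only [hzy, hyz]
            cases h : decEq z y with
            | isTrue h' => exact absurd h' hd
            | isFalse h' => rfl
          · simp only [BT.In]; tauto

theorem BT.in_ins {α : Type} [DecidableEq α] (lt : α → α → Bool) (z w : α) (t : BT α) :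
    BT.In w (BT.ins lt z t) ↔ w = z ∨ BT.In w t := by
  obtain ⟨l, y, r, e, h⟩ := BT.ins_spec lt z t
  rw [e, h]

def InS (s : S) (t : BT (S × ℕ)) : Prop := ∃ c, t.In (s, c)

theorem inS_insS (u s : S) (t : BT (S × ℕ)) : InS u (insS s t) ↔ u = s ∨ InS u t := by
  unfold InS insS
  rw [S.force_eq, forceNat_eq]
  simp only [BT.in_ins, Prod.mk.injEq]
  constructor
  · rintro ⟨c, h | h⟩
    · exact Or.inl h.1
    · exact Or.inr ⟨c, h⟩
  · rintro (h | ⟨c, h⟩)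
    · exact ⟨_, Or.inl ⟨h, rfl⟩⟩
    · exact ⟨c, Or.inr h⟩

/-- all four combinations of `a` and `b` satisfy `Q` -/
def All4 (a b : S) (Q : S → Prop) : Prop :=
  Q (S.addN a b) ∧ Q (S.subN S.ngg a b) ∧ Q (S.mulN a b) ∧ Q (S.divN a b)

theorem All4.mono {a b : S} {Q Q' : S → Prop} (h : All4 a b Q) (hQ : ∀ s, Q s → Q' s) :
    All4 a b Q' :=
  ⟨hQ _ h.1, hQ _ h.2.1, hQ _ h.2.2.1, hQ _ h.2.2.2⟩

theorem inS_ins4 (u a b : S) (t : BT (S × ℕ)) : InS u (ins4 a b t) ↔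
    u = S.divN a b ∨ u = S.mulN a b ∨ u = S.subN S.ngg a b ∨ u = S.addN a b ∨ InS u t := by
  unfold ins4
  simp only [BT.force_eq, inS_insS]

theorem inS_crossI {u : S} (a : S) (m : List S) (t : BT (S × ℕ)) (h : InS u t) :
    InS u (crossI a m t) := by
  induction m generalizing t with
  | nil => exact h
  | cons b m ih =>
    rw [crossI, BT.force_eq]
    exact ih _ ((inS_ins4 _ _ _ _).2 (by tauto))

theorem all4_crossI (a : S) (m : List S) (t : BT (S × ℕ)) {b : S} (hb : b ∈ m) :
    All4 a b fun s => InS s (crossI a m t) := by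
  induction m generalizing t with
  | nil => cases hb
  | cons c m ih =>
    rw [crossI, BT.force_eq]
    rcases List.mem_cons.1 hb with rfl | hb
    · refine All4.mono (Q := fun s => InS s (ins4 a b t)) ?_ (fun s => inS_crossI _ _ _)
      simp only [All4, inS_ins4]
      tauto
    · exact ih _ hb

theorem inS_cross {u : S} (m l : List S) (t : BT (S × ℕ)) (h : InS u t) :
    InS u (cross m l t) := by
  induction l generalizing t with
  | nil => exact h
  | cons b m ih =>
    rw [cross, BT.force_eq]
    exact ih _ (inS_crossI _ _ _ h)

theorem all4_cross (m l : List S) (t : BT (S × ℕ)) {a b : S} (ha : a ∈ l) (hb : b ∈ m) :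
    All4 a b fun s => InS s (cross m l t) := by
  induction l generalizing t with
  | nil => cases ha
  | cons c l ih =>
    rw [cross, BT.force_eq]
    rcases List.mem_cons.1 ha with rfl | ha
    · exact All4.mono (all4_crossI _ _ _ hb) (fun s => inS_cross _ _ _)
    · exact ih _ ha

theorem mem_fsts (s : S) (l : List (S × ℕ)) : s ∈ fsts l ↔ ∃ c, (s, c) ∈ l := by
  induction l with
  | nil => simp [fsts]
  | cons a l ih =>
    obtain ⟨a, c⟩ := a
    simp only [fsts, List.mem_cons, ih, Prod.mk.injEq]
    constructor
    · rintro (h | ⟨d, h⟩)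
      · exact ⟨c, Or.inl ⟨h, rfl⟩⟩
      · exact ⟨d, Or.inr h⟩
    · rintro ⟨d, h | h⟩
      · exact Or.inl h.1
      · exact Or.inr ⟨d, h⟩

theorem mem_RL (s : S) (t : BT (S × ℕ)) : s ∈ RL t ↔ InS s t := by
  rw [RL, BT.flatF_eq, forceL_eq, mem_fsts]
  simp [BT.mem_flat, InS]

/-- The tables of shapes. -/
def RR : ℕ → List S
  | 1 => R1
  | 2 => R2
  | 3 => R3
  | 4 => R4
  | 5 => R5
  | 6 => R6
  | _ => []

def ClosedR (n : ℕ) : Prop := ∀ k l, 0 < k → 0 < l → k + l = n → ∀ a ∈ RR k, ∀ b ∈ RR l,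
  All4 a b fun s => s ∈ RR n

theorem closed2 : ClosedR 2 := by
  intro k l hk hl h a ha b hb
  obtain ⟨rfl, rfl⟩ : k = 1 ∧ l = 1 := by omega
  simp only [RR] at ha hb ⊢
  rw [R2]
  simp only [mem_RL]
  exact all4_cross _ _ _ ha hb

theorem closed3 : ClosedR 3 := by
  intro k l hk hl h a ha b hb
  obtain rfl : l = 3 - k := by omega
  have hk' : k ≤ 2 := by omega
  interval_cases k <;> simp only [RR, Nat.reduceSub] at ha hb ⊢ <;> rw [R3] <;>
    simp only [mem_RL, forceL_eq]
  · exact All4.mono (all4_cross _ _ _ ha hb) fun _ h => h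
  · exact All4.mono (all4_cross _ _ _ ha hb) fun _ h => inS_cross _ _ _ h

theorem closed4 : ClosedR 4 := by
  intro k l hk hl h a ha b hb
  obtain rfl : l = 4 - k := by omega
  have hk' : k ≤ 3 := by omega
  interval_cases k <;> simp only [RR, Nat.reduceSub] at ha hb ⊢ <;> rw [R4] <;>
    simp only [mem_RL, forceL_eq]
  · exact All4.mono (all4_cross _ _ _ ha hb) fun _ h => inS_cross _ _ _ (inS_cross _ _ _ h)
  · exact All4.mono (all4_cross _ _ _ ha hb) fun _ h => inS_cross _ _ _ h
  · exact All4.mono (all4_cross _ _ _ ha hb) fun _ h => h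

theorem closed5 : ClosedR 5 := by
  intro k l hk hl h a ha b hb
  obtain rfl : l = 5 - k := by omega
  have hk' : k ≤ 4 := by omega
  interval_cases k <;> simp only [RR, Nat.reduceSub] at ha hb ⊢ <;> rw [R5] <;>
    simp only [mem_RL, forceL_eq]
  · exact All4.mono (all4_cross _ _ _ ha hb) fun _ h =>
      inS_cross _ _ _ (inS_cross _ _ _ (inS_cross _ _ _ h))
  · exact All4.mono (all4_cross _ _ _ ha hb) fun _ h => inS_cross _ _ _ (inS_cross _ _ _ h)
  · exact All4.mono (all4_cross _ _ _ ha hb) fun _ h => inS_cross _ _ _ h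
  · exact All4.mono (all4_cross _ _ _ ha hb) fun _ h => h

theorem closed6 : ClosedR 6 := by
  intro k l hk hl h a ha b hb
  obtain rfl : l = 6 - k := by omega
  have hk' : k ≤ 5 := by omega
  interval_cases k <;> simp only [RR, Nat.reduceSub] at ha hb ⊢ <;> rw [R6] <;>
    simp only [mem_RL, forceL_eq]
  · exact All4.mono (all4_cross _ _ _ ha hb) fun _ h =>
      inS_cross _ _ _ (inS_cross _ _ _ (inS_cross _ _ _ (inS_cross _ _ _ h)))
  · exact All4.mono (all4_cross _ _ _ ha hb) fun _ h =>
      inS_cross _ _ _ (inS_cross _ _ _ (inS_cross _ _ _ h))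
  · exact All4.mono (all4_cross _ _ _ ha hb) fun _ h => inS_cross _ _ _ (inS_cross _ _ _ h)
  · exact All4.mono (all4_cross _ _ _ ha hb) fun _ h => inS_cross _ _ _ h
  · exact All4.mono (all4_cross _ _ _ ha hb) fun _ h => h

theorem IsAE.exists_den {f : K} (h : IsAE f) : ∃ s, Den s f := by
  induction h with
  | var i => exact ⟨.x, i, rfl⟩
  | add _ _ hd h1 h2 =>
    obtain ⟨a, ha⟩ := h1
    obtain ⟨b, hb⟩ := h2
    exact ⟨.add a b, _, _, ha, hb, hd, rfl⟩
  | sub _ _ hd h1 h2 =>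
    obtain ⟨a, ha⟩ := h1
    obtain ⟨b, hb⟩ := h2
    exact ⟨.sub a b, _, _, ha, hb, hd, rfl⟩
  | mul _ _ hd h1 h2 =>
    obtain ⟨a, ha⟩ := h1
    obtain ⟨b, hb⟩ := h2
    exact ⟨.mul a b, _, _, ha, hb, hd, rfl⟩
  | div _ _ hd h1 h2 =>
    obtain ⟨a, ha⟩ := h1
    obtain ⟨b, hb⟩ := h2
    exact ⟨.div a b, _, _, ha, hb, hd, rfl⟩

theorem S.size_pos (s : S) : 0 < s.size := (den_good s).pos

/-- The table `RR n` contains every shape of size `n`, up to normalization. -/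
def Cov (n : ℕ) : Prop := ∀ s : S, s.size = n → ∃ s' ∈ RR n, LeS s s'

theorem cov1 : Cov 1 := by
  intro s hs
  cases s with
  | x => exact ⟨.x, List.mem_singleton.2 rfl, LeS.rfl'⟩
  | add a b => have := a.size_pos; have := b.size_pos; change a.size + b.size = 1 at hs; omega
  | sub a b => have := a.size_pos; have := b.size_pos; change a.size + b.size = 1 at hs; omega
  | mul a b => have := a.size_pos; have := b.size_pos; change a.size + b.size = 1 at hs; omega
  | div a b => have := a.size_pos; have := b.size_pos; change a.size + b.size = 1 at hs; omega

theorem cov_step {n : ℕ} (hn : 2 ≤ n) (hc : ClosedR n) (hm : ∀ m, 0 < m → m < n → Cov m) :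
    Cov n := by
  have key : ∀ a b : S, a.size + b.size = n → ∃ a' b', LeS a a' ∧ LeS b b' ∧
      All4 a' b' fun s => s ∈ RR n := by
    intro a b h
    have h1 := a.size_pos
    have h2 := b.size_pos
    obtain ⟨a', ha, hla⟩ := hm a.size h1 (by omega) a rfl
    obtain ⟨b', hb, hlb⟩ := hm b.size h2 (by omega) b rfl
    exact ⟨a', b', hla, hlb, hc _ _ h1 h2 h _ ha _ hb⟩
  intro s hs
  cases s with
  | x => change 1 = n at hs; omega
  | add a b =>
    obtain ⟨a', b', h1, h2, h3⟩ := key a b hs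
    exact ⟨_, h3.1, (LeS.add h1 h2).trans (S.addN_le _ _)⟩
  | sub a b =>
    obtain ⟨a', b', h1, h2, h3⟩ := key a b hs
    exact ⟨_, h3.2.1, (LeS.sub h1 h2).trans (S.subN_le S.ngg_sound _ _)⟩
  | mul a b =>
    obtain ⟨a', b', h1, h2, h3⟩ := key a b hs
    exact ⟨_, h3.2.2.1, (LeS.mul h1 h2).trans (S.mulN_le _ _)⟩
  | div a b =>
    obtain ⟨a', b', h1, h2, h3⟩ := key a b hs
    exact ⟨_, h3.2.2.2, (LeS.div h1 h2).trans (S.divN_le _ _)⟩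

theorem cov2 : Cov 2 := cov_step (by omega) closed2 fun m h1 h2 => by
  obtain rfl : m = 1 := by omega
  exact cov1

theorem cov3 : Cov 3 := cov_step (by omega) closed3 fun m h1 h2 => by
  interval_cases m
  · exact cov1
  · exact cov2

theorem cov4 : Cov 4 := cov_step (by omega) closed4 fun m h1 h2 => by
  interval_cases m
  · exact cov1
  · exact cov2
  · exact cov3

theorem cov5 : Cov 5 := cov_step (by omega) closed5 fun m h1 h2 => by
  interval_cases m
  · exact cov1
  · exact cov2
  · exact cov3
  · exact cov4

theorem cov6 : Cov 6 := cov_step (by omega) closed6 fun m h1 h2 => by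
  interval_cases m
  · exact cov1
  · exact cov2
  · exact cov3
  · exact cov4
  · exact cov5

/-! ### Counting -/

def PosK (a : S × ℕ × ℕ) : Prop := 0 < a.2.1 ∧ 0 < a.2.2

def LtK (a b : S × ℕ × ℕ) : Prop := a.2.1 * b.2.2 < b.2.1 * a.2.2

theorem LtK.trans {a b c : S × ℕ × ℕ} (ha : PosK a) (hc : PosK c) (h : LtK a b) (h' : LtK b c) :
    LtK a c := by
  obtain ⟨_, a1, a2⟩ := a
  obtain ⟨_, b1, b2⟩ := b
  obtain ⟨_, c1, c2⟩ := c
  simp only [LtK, PosK] at *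
  have h1 : a1 * b2 * c2 < b1 * a2 * c2 := Nat.mul_lt_mul_of_pos_right h hc.2
  have h2 : b1 * c2 * a2 < c1 * b2 * a2 := Nat.mul_lt_mul_of_pos_right h' ha.2
  have h3 : b2 * (a1 * c2) < b2 * (c1 * a2) := by
    calc b2 * (a1 * c2) = a1 * b2 * c2 := by ring
      _ < b1 * a2 * c2 := h1
      _ = b1 * c2 * a2 := by ring
      _ < c1 * b2 * a2 := h2
      _ = b2 * (c1 * a2) := by ring
  exact Nat.lt_of_mul_lt_mul_left h3

theorem blt_true {a b : ℕ} (h : Nat.blt a b = true) : a < b := Nat.le_of_ble_eq_true h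

theorem sortedK_spec (l : List (S × ℕ × ℕ)) (h : sortedK l = true) :
    (∀ a ∈ l, PosK a) ∧ l.Pairwise LtK := by
  fun_induction sortedK l with
  | case1 => simp
  | case2 a =>
    rw [Bool.and_eq_true] at h
    simp only [List.mem_singleton, forall_eq, List.pairwise_singleton, and_true]
    exact ⟨blt_true h.1, blt_true h.2⟩
  | case3 a b l ih =>
    simp only [Bool.and_eq_true] at h
    obtain ⟨⟨⟨h1, h2⟩, h3⟩, h4⟩ := h
    obtain ⟨i1, i2⟩ := ih h4
    have ha : PosK a := ⟨blt_true h2, blt_true h3⟩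
    have hab : LtK a b := blt_true h1
    refine ⟨?_, ?_⟩
    · intro c hc
      rcases List.mem_cons.1 hc with rfl | hc
      · exact ha
      · exact i1 c hc
    · rw [List.pairwise_cons]
      refine ⟨?_, i2⟩
      intro c hc
      rcases List.mem_cons.1 hc with rfl | hc'
      · exact hab
      · exact LtK.trans ha (i1 c hc) hab (List.rel_of_pairwise_cons i2 hc')

theorem in_buildK (l : List S) (t : BT (S × ℕ × ℕ)) (z : S × ℕ × ℕ) (h : (buildK l t).In z) :
    t.In z ∨ (z.1 ∈ l ∧ z.2.1 = z.1.W.num.toNat ∧ z.2.2 = z.1.W.w0.toNat) := by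
  induction l generalizing t with
  | nil => exact Or.inl h
  | cons s l ih =>
    rw [buildK, BT.force_eq] at h
    rcases ih _ h with h | h
    · rw [insK, W5.force_eq, forceNat_eq, forceNat_eq, BT.in_ins] at h
      rcases h with rfl | h
      · exact Or.inr ⟨List.mem_cons_self, rfl, rfl⟩
      · exact Or.inl h
    · exact Or.inr ⟨List.mem_cons_of_mem _ h.1, h.2⟩

theorem allSize_spec (n : ℕ) (l : List S) (h : allSize n l = true) : ∀ s ∈ l, s.size = n := by
  induction l with
  | nil => simp
  | cons a l ih =>
    rw [allSize, Bool.and_eq_true] at h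
    intro s hs
    rcases List.mem_cons.1 hs with rfl | hs
    · exact Nat.eq_of_beq_eq_true h.1
    · exact ih h.2 s hs

theorem den_nonempty (s : S) : ∃ f, Den s f := by
  obtain ⟨f, hf, -⟩ := (den_good s).ex (Finset.range s.size) (Finset.card_range _)
  exact ⟨f, hf⟩

theorem varsUpTo_eq (n : ℕ) : varsUpTo n = ↑(Finset.Icc 1 n) := by
  ext i; simp [varsUpTo]

theorem count_eq {N n : ℕ} (hcov : Cov n) (hch : checkN N n (RR n) = true) :
    countClasses (AEn n) = N := by
  classical
  rw [checkN, forceL_eq, BT.flatF_eq, Bool.and_eq_true, Bool.and_eq_true, Bool.and_eq_true] at hch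
  obtain ⟨⟨hlen, hsize⟩, hlen', hsort⟩ := hch
  replace hlen := Nat.eq_of_beq_eq_true hlen
  replace hlen' := Nat.eq_of_beq_eq_true hlen'
  replace hsize := allSize_spec _ _ hsize
  obtain ⟨hpos, hpw⟩ := sortedK_spec _ hsort
  set m := (buildK (RR n) .nil).flat [] with hm
  have hmem : ∀ z ∈ m, z.1 ∈ RR n ∧ z.2.1 = z.1.W.num.toNat ∧ z.2.2 = z.1.W.w0.toNat := by
    intro z hz
    rw [hm, BT.mem_flat] at hz
    rcases hz with hz | hz
    · rcases in_buildK _ _ _ hz with h | h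
      · exact h.elim
      · exact h
    · cases hz
  let D : S → Set K := fun s => {g | Den s g}
  have hup : classes (AEn n) ⊆ ↑((RR n).toFinset.image D) := by
    rintro _ ⟨f, ⟨hf, hv⟩, rfl⟩
    obtain ⟨s, hs⟩ := hf.exists_den
    have hsz : s.size = n := by
      rw [← (den_good s).card f hs, hv, varsUpTo_eq, Set.ncard_coe_finset, Nat.card_Icc]
      omega
    obtain ⟨s', hs', hle⟩ := hcov s hsz
    rw [(hle f hs).classOf]
    simp only [Finset.coe_image, Set.mem_image, List.coe_toFinset]
    exact ⟨s', hs', rfl⟩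
  have hlow : (↑((m.map fun z => D z.1).toFinset) : Set (Set K)) ⊆ classes (AEn n) := by
    intro c hc
    simp only [List.coe_toFinset, List.mem_map, Set.mem_setOf_eq] at hc
    obtain ⟨z, hz, rfl⟩ := hc
    have hz' := hsize _ (hmem z hz).1
    obtain ⟨f, hf, hfv⟩ := (den_good z.1).ex (Finset.Icc 1 n) (by rw [Nat.card_Icc, hz']; omega)
    exact ⟨f, ⟨hf.isAE, by rw [hfv, varsUpTo_eq]⟩, hf.classOf⟩
  have hnd : (m.map fun z => D z.1).Nodup := by
    rw [List.Nodup, List.pairwise_map]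
    refine List.Pairwise.imp_of_mem ?_ hpw
    intro y z hy hz hlt heq
    obtain ⟨f, hf⟩ := den_nonempty y.1
    have hf' : Den z.1 f := by
      have : f ∈ D z.1 := heq ▸ hf
      exact this
    have hu := hf.hasW.unique hf'.hasW
    obtain ⟨-, y1, y2⟩ := hmem y hy
    obtain ⟨-, z1, z2⟩ := hmem z hz
    have py := hpos y hy
    have pz := hpos z hz
    have ey1 : y.1.W.num = y.2.1 := by have := py.1; omega
    have ey2 : y.1.W.w0 = y.2.2 := by have := py.2; omega
    have ez1 : z.1.W.num = z.2.1 := by have := pz.1; omega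
    have ez2 : z.1.W.w0 = z.2.2 := by have := pz.2; omega
    rw [ey1, ey2, ez1, ez2] at hu
    have hu' : y.2.1 * z.2.2 = z.2.1 * y.2.2 := by exact_mod_cast hu
    exact absurd hu' (Nat.ne_of_lt hlt)
  have hfin : (classes (AEn n)).Finite := (Finset.finite_toSet _).subset hup
  apply le_antisymm
  · refine (Set.ncard_le_ncard hup (Finset.finite_toSet _)).trans ?_
    rw [Set.ncard_coe_finset]
    exact Finset.card_image_le.trans ((List.toFinset_card_le _).trans hlen.le)
  · have h := Set.ncard_le_ncard hlow hfin
    rw [Set.ncard_coe_finset, List.toFinset_card_of_nodup hnd, List.length_map, hlen'] at h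
    exact h

theorem check1 : checkN 1 1 R1 = true := by decide +kernel
theorem check2 : checkN 4 2 R2 = true := by decide +kernel
theorem check3 : checkN 18 3 R3 = true := by decide +kernel
theorem check4 : checkN 93 4 R4 = true := by decide +kernel
theorem check5 : checkN 500 5 R5 = true := by decide +kernel
theorem check6 : checkN 2844 6 R6 = true := by decide +kernel

/-- The number `|𝒜̄ₙ|` of isomorphism classes of arithmetic
expressions with exactly the variables `x₁, …, xₙ` equals `1, 4, 18, 93, 500, 2844` for
`n = 1, 2, 3, 4, 5, 6`. -/
theorem count_classes_small_n :
    countClasses (AEn 1) = 1 ∧ countClasses (AEn 2) = 4 ∧ countClasses (AEn 3) = 18 ∧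
    countClasses (AEn 4) = 93 ∧ countClasses (AEn 5) = 500 ∧
    countClasses (AEn 6) = 2844 := by
  exact ⟨count_eq cov1 check1, count_eq cov2 check2, count_eq cov3 check3,
    count_eq cov4 check4, count_eq cov5 check5, count_eq cov6 check6⟩

end
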